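/- arXiv:2507.15196 — 3 statements merged into one kernel-verified Lean document; each statement's English description precedes it below -/
import Mathlib

section
/- There is an absolute constant A > 0 such that for all independent real random variables X, Y, Z with bounded ranges and all n ∈ ℕ: (a) Hₙ(X + Y + Z) ≤ Hₙ(X + Z) + Hₙ(Y + Z) − Hₙ(Z) + A; (b) Hₙ(X + Y) ≤ Hₙ(X + Z) + Hₙ(Y + Z) − Hₙ(Z) + A; and (c) Hₙ(X − Y) ≤ Hₙ(X + Z) + Hₙ(Y + Z) − Hₙ(Z) + A. -/
open MeasureTheory ProbabilityTheory Real

/-- The dyadic discretization map `D_n(x) = 2^{-n} ⌊2^n x⌋`. -/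
noncomputable def Dn (n : ℕ) (x : ℝ) : ℝ := (⌊(2 : ℝ) ^ n * x⌋ : ℝ) / (2 : ℝ) ^ n

/-- Shannon entropy (base 2) of the discrete random variable `f` under `P`. -/
noncomputable def entOf {Ω : Type*} [MeasurableSpace Ω] {S : Type*}
    (P : Measure Ω) (f : Ω → S) : ℝ :=
  ∑' s : S, -((P (f ⁻¹' {s})).toReal * Real.logb 2 (P (f ⁻¹' {s})).toReal)

/-- `H_n(X)`: entropy of `D_n(X)`. -/
noncomputable def Hn {Ω : Type*} [MeasurableSpace Ω] (P : Measure Ω) (n : ℕ) (X : Ω → ℝ) : ℝ :=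
  entOf P (fun ω => Dn n (X ω))

/-!
The Shannon entropy of `f` is the integral of the information content `-log₂ P(f = f ω)`, and
Gibbs' inequality, which is `log t ≤ t - 1` integrated, gives submodularity: if `h` is a function
of `f` and also a function of `g`, then `H(f, g) + H(h) ≤ H(f) + H(g)`. For discrete independent
`x`, `y`, `z` in an abelian group, each of the three inequalities holds without error term:

* for `x + y + z`, take `f = (x, y + z)`, `g = (y, x + z)`, which determine `x`, `y` and `z`;
* for `x + y`, use `H(x + y) + H(z) = H(x + y, z) ≤ H(x + y + z) + H(z)` and the previous case;
* for `x - y`, take `f = (x, y)`, `g = (x + z, y + z)`, both of which determine `x - y`.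

Apply this to the integers `⌊2ⁿ X⌋`, `⌊2ⁿ Y⌋`, `⌊2ⁿ Z⌋`. Floors are additive up to an error taking
a bounded number of values, which changes each entropy by at most one or two bits.
-/

open scoped ENNReal

/-- The information content `-log₂ P(f = f ω)` of observing the value `f ω`. Its integral is the
Shannon entropy of `f`, which turns entropy inequalities into inequalities between functions on
`Ω`. It is `0`, not infinite, where the fibre of `f` is a null set. -/
noncomputable def information {Ω S : Type*} [MeasurableSpace Ω] (P : Measure Ω) (f : Ω → S)
    (ω : Ω) : ℝ :=
  -logb 2 (P.real (f ⁻¹' {f ω}))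

/-- Finiteness of the Shannon entropy of `f`. When it fails, `entOf P f` has the junk value `0`. -/
def HasFiniteEntropy {Ω S : Type*} [MeasurableSpace Ω] (P : Measure Ω) (f : Ω → S) : Prop :=
  Integrable (information P f) P

section Fibers

variable {Ω S T : Type*} [MeasurableSpace Ω] {P : Measure Ω}

lemma ae_measureReal_fiber_pos [IsFiniteMeasure P] [Countable S] (f : Ω → S) :
    ∀ᵐ ω ∂P, 0 < P.real (f ⁻¹' {f ω}) := by
  have avoids_null_fibers : ∀ᵐ ω ∂P, ∀ s, P (f ⁻¹' {s}) = 0 → f ω ≠ s :=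
    ae_all_iff.2 fun _ => Filter.eventually_imp_distrib_left.2 measure_eq_zero_iff_ae_notMem.1
  filter_upwards [avoids_null_fibers] with ω hω
  exact ENNReal.toReal_pos (fun hzero => hω _ hzero rfl) (measure_ne_top P _)

variable [Countable S] [MeasurableSpace S] [MeasurableSingletonClass S] {f : Ω → S}

lemma lintegral_comp_eq_tsum (hf : Measurable f) (φ : S → ℝ≥0∞) :
    ∫⁻ ω, φ (f ω) ∂P = ∑' s, φ s * P (f ⁻¹' {s}) := by
  rw [← lintegral_map (measurable_of_countable φ) hf, lintegral_countable']
  simp_rw [Measure.map_apply hf (measurableSet_singleton _)]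

lemma tsum_measure_fiber (hf : Measurable f) : ∑' s, P (f ⁻¹' {s}) = P Set.univ := by
  simpa using (lintegral_comp_eq_tsum (P := P) hf 1).symm

lemma tsum_measure_fiber_prodMk (hf : Measurable f) (h : Ω → T) (u : T) :
    ∑' s, P ((fun ω => (h ω, f ω)) ⁻¹' {(u, s)}) = P (h ⁻¹' {u}) := by
  have fiber_eq (s : S) : (fun ω => (h ω, f ω)) ⁻¹' {(u, s)} = f ⁻¹' {s} ∩ h ⁻¹' {u} := by
    ext ω
    simp [and_comm]
  simp_rw [fiber_eq, ← Measure.restrict_apply (hf (measurableSet_singleton _)),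
    tsum_measure_fiber hf, Measure.restrict_apply_univ]

lemma lintegral_div_measure_fiber_le (hf : Measurable f) (q : S → ℝ≥0∞) :
    ∫⁻ ω, q (f ω) / P (f ⁻¹' {f ω}) ∂P ≤ ∑' s, q s := by
  rw [lintegral_comp_eq_tsum hf fun s => q s / P (f ⁻¹' {s})]
  exact ENNReal.tsum_le_tsum fun s => ENNReal.mul_le_of_le_div le_rfl

end Fibers

section Information

variable {Ω S T : Type*}

lemma fiber_subset_of_factorsThrough {f : Ω → S} {g : Ω → T} (hgf : g.FactorsThrough f) (ω : Ω) :
    f ⁻¹' {f ω} ⊆ g ⁻¹' {g ω} :=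
  fun _ hω' => hgf hω'

variable [MeasurableSpace Ω] {P : Measure Ω} {f : Ω → S} {g : Ω → T}

lemma information_nonneg [IsProbabilityMeasure P] (f : Ω → S) (ω : Ω) : 0 ≤ information P f ω :=
  neg_nonneg.2 (logb_nonpos one_lt_two measureReal_nonneg measureReal_le_one)

lemma information_congr (hgf : g.FactorsThrough f) (hfg : f.FactorsThrough g) :
    information P g = information P f := by
  ext ω
  rw [information, information, (fiber_subset_of_factorsThrough hgf ω).antisymm
    (fiber_subset_of_factorsThrough hfg ω)]

lemma HasFiniteEntropy.congr (hf : HasFiniteEntropy P f) (hgf : g.FactorsThrough f)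
    (hfg : f.FactorsThrough g) : HasFiniteEntropy P g := by
  rwa [HasFiniteEntropy, information_congr hgf hfg]

lemma entOf_comp_injective (P : Measure Ω) {e : S → T} (he : e.Injective) (f : Ω → S) :
    entOf P (fun ω => e (f ω)) = entOf P f := by
  have fiber_eq (s : S) : (fun ω => e (f ω)) ⁻¹' {e s} = f ⁻¹' {s} := by
    ext ω
    simp [he.eq_iff]
  have fiber_empty {t : T} (ht : t ∉ Set.range e) : (fun ω => e (f ω)) ⁻¹' {t} = ∅ :=
    Set.eq_empty_of_forall_notMem fun ω hω => ht ⟨f ω, hω⟩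
  rw [entOf, entOf, ← he.tsum_eq]
  · simp_rw [fiber_eq]
  · refine Function.support_subset_iff'.2 fun t ht => ?_
    simp [fiber_empty ht]

variable [Countable S]

lemma information_ae_le_of_factorsThrough [IsFiniteMeasure P] (hgf : g.FactorsThrough f) :
    information P g ≤ᵐ[P] information P f := by
  filter_upwards [ae_measureReal_fiber_pos f] with ω hpos
  exact neg_le_neg <| logb_le_logb_of_le one_lt_two hpos
    (measureReal_mono (fiber_subset_of_factorsThrough hgf ω))

variable [Countable T] [MeasurableSpace T] [MeasurableSingletonClass T]

lemma measurable_information (hg : Measurable g) : Measurable (information P g) :=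
  (measurable_of_countable fun t => -logb 2 (P.real (g ⁻¹' {t}))).comp hg

lemma HasFiniteEntropy.of_factorsThrough [IsProbabilityMeasure P] (hf : HasFiniteEntropy P f)
    (hg : Measurable g) (hgf : g.FactorsThrough f) : HasFiniteEntropy P g := by
  refine Integrable.mono' hf (measurable_information hg).aestronglyMeasurable ?_
  filter_upwards [information_ae_le_of_factorsThrough hgf] with ω hω
  rwa [Real.norm_of_nonneg (information_nonneg g ω)]

lemma entOf_eq_integral_information [IsProbabilityMeasure P] (hg : Measurable g) :
    entOf P g = ∫ ω, information P g ω ∂P := by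
  let φ (t : T) : ℝ := -logb 2 (P.real (g ⁻¹' {t}))
  have φ_nonneg (t : T) : 0 ≤ φ t :=
    neg_nonneg.2 (logb_nonpos one_lt_two measureReal_nonneg measureReal_le_one)
  symm
  calc ∫ ω, information P g ω ∂P
      = (∫⁻ ω, ENNReal.ofReal (φ (g ω)) ∂P).toReal :=
        integral_eq_lintegral_of_nonneg_ae (.of_forall (information_nonneg g))
          (measurable_information hg).aestronglyMeasurable
    _ = ∑' t, (ENNReal.ofReal (φ t) * P (g ⁻¹' {t})).toReal := by
        rw [lintegral_comp_eq_tsum hg fun t => ENNReal.ofReal (φ t), ENNReal.tsum_toReal_eq]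
        exact fun t => ENNReal.mul_ne_top ENNReal.ofReal_ne_top (measure_ne_top P _)
    _ = entOf P g := by
        refine tsum_congr fun t => ?_
        rw [ENNReal.toReal_mul, ENNReal.toReal_ofReal (φ_nonneg t), mul_comm, ← mul_neg]
        rfl

variable [MeasurableSpace S] [MeasurableSingletonClass S]

lemma entOf_congr [IsProbabilityMeasure P] (hf : Measurable f) (hg : Measurable g)
    (hgf : g.FactorsThrough f) (hfg : f.FactorsThrough g) : entOf P g = entOf P f := by
  rw [entOf_eq_integral_information hf, entOf_eq_integral_information hg,
    information_congr hgf hfg]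

lemma HasFiniteEntropy.entOf_le_of_factorsThrough [IsProbabilityMeasure P] (hf : Measurable f)
    (hfin : HasFiniteEntropy P f) (hg : Measurable g) (hgf : g.FactorsThrough f) :
    entOf P g ≤ entOf P f := by
  rw [entOf_eq_integral_information hf, entOf_eq_integral_information hg]
  exact integral_mono_ae (hfin.of_factorsThrough hg hgf) hfin
    (information_ae_le_of_factorsThrough hgf)

lemma information_ae_eq_add_of_indepFun [IsFiniteMeasure P] (hfg : IndepFun f g P) :
    information P (fun ω => (f ω, g ω)) =ᵐ[P] information P f + information P g := by
  filter_upwards [ae_measureReal_fiber_pos f, ae_measureReal_fiber_pos g] with ω hf hg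
  have fiber_eq : (fun ω => (f ω, g ω)) ⁻¹' {(f ω, g ω)} = f ⁻¹' {f ω} ∩ g ⁻¹' {g ω} := by
    ext ω'
    simp
  have prob_mul : P.real (f ⁻¹' {f ω} ∩ g ⁻¹' {g ω}) =
      P.real (f ⁻¹' {f ω}) * P.real (g ⁻¹' {g ω}) := by
    simp only [measureReal_def, ← ENNReal.toReal_mul, hfg.measure_inter_preimage_eq_mul _ _
      (measurableSet_singleton _) (measurableSet_singleton _)]
  rw [Pi.add_apply, information, information, information, fiber_eq, prob_mul,
    logb_mul hf.ne' hg.ne', neg_add]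

lemma entOf_prodMk_of_indepFun [IsProbabilityMeasure P] (hf : Measurable f) (hg : Measurable g)
    (hf_fin : HasFiniteEntropy P f) (hg_fin : HasFiniteEntropy P g) (hfg : IndepFun f g P) :
    entOf P (fun ω => (f ω, g ω)) = entOf P f + entOf P g := by
  rw [entOf_eq_integral_information (hf.prodMk hg), entOf_eq_integral_information hf,
    entOf_eq_integral_information hg, integral_congr_ae (information_ae_eq_add_of_indepFun hfg)]
  exact integral_add hf_fin hg_fin

end Information

section Gibbs

variable {Ω S : Type*} [MeasurableSpace Ω] {P : Measure Ω}
  [Countable S] {f : Ω → S} {q : S → ℝ≥0∞}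

lemma information_ae_le_of_tsum_le_one [IsFiniteMeasure P] (hq : ∑' s, q s ≤ 1)
    (hpos : ∀ᵐ ω ∂P, q (f ω) ≠ 0) :
    ∀ᵐ ω ∂P, information P f ω ≤
      -logb 2 (q (f ω)).toReal + ((q (f ω) / P (f ⁻¹' {f ω})).toReal - 1) / log 2 := by
  filter_upwards [hpos, ae_measureReal_fiber_pos f] with ω hq_pos hP_pos
  have q_toReal_pos : 0 < (q (f ω)).toReal :=
    ENNReal.toReal_pos hq_pos (ne_top_of_le_ne_top ENNReal.one_ne_top
      ((ENNReal.le_tsum _).trans hq))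
  have logb_ratio := div_le_div_of_nonneg_right
    (log_le_sub_one_of_pos (div_pos q_toReal_pos hP_pos)) (log_nonneg one_le_two)
  rw [← logb, logb_div q_toReal_pos.ne' hP_pos.ne', measureReal_def, ← ENNReal.toReal_div]
    at logb_ratio
  rw [information, measureReal_def]
  linarith

variable [MeasurableSpace S] [MeasurableSingletonClass S]

lemma integrable_toReal_div_measure_fiber (hf : Measurable f) (hq : ∑' s, q s ≤ 1) :
    Integrable (fun ω => (q (f ω) / P (f ⁻¹' {f ω})).toReal) P :=
  integrable_toReal_of_lintegral_ne_top
    ((measurable_of_countable fun s => q s / P (f ⁻¹' {s})).comp hf).aemeasurable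
    (ne_top_of_le_ne_top ENNReal.one_ne_top ((lintegral_div_measure_fiber_le hf q).trans hq))

lemma integral_toReal_div_measure_fiber_le_one (hf : Measurable f) (hq : ∑' s, q s ≤ 1) :
    ∫ ω, (q (f ω) / P (f ⁻¹' {f ω})).toReal ∂P ≤ 1 := by
  have ratio_measurable : Measurable fun ω => q (f ω) / P (f ⁻¹' {f ω}) :=
    (measurable_of_countable fun s => q s / P (f ⁻¹' {s})).comp hf
  have lintegral_ratio_le := (lintegral_div_measure_fiber_le (P := P) hf q).trans hq
  rw [integral_toReal ratio_measurable.aemeasurable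
    (ae_lt_top ratio_measurable (ne_top_of_le_ne_top ENNReal.one_ne_top lintegral_ratio_le))]
  exact ENNReal.toReal_mono ENNReal.one_ne_top lintegral_ratio_le

theorem gibbs_inequality [IsProbabilityMeasure P] (hf : Measurable f) (hq : ∑' s, q s ≤ 1)
    (hpos : ∀ᵐ ω ∂P, q (f ω) ≠ 0) {c : Ω → ℝ} (hc : Integrable c P)
    (hqc : ∀ᵐ ω ∂P, -logb 2 (q (f ω)).toReal ≤ c ω) :
    HasFiniteEntropy P f ∧ entOf P f ≤ ∫ ω, c ω ∂P := by
  let ratio (ω : Ω) : ℝ := (q (f ω) / P (f ⁻¹' {f ω})).toReal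
  have excess_integrable : Integrable (fun ω => (ratio ω - 1) / log 2) P :=
    ((integrable_toReal_div_measure_fiber hf hq).sub (integrable_const 1)).div_const _
  have excess_integral : ∫ ω, (ratio ω - 1) / log 2 ∂P ≤ 0 := by
    rw [integral_div, integral_sub (integrable_toReal_div_measure_fiber hf hq)
      (integrable_const 1), integral_const, probReal_univ, one_smul]
    exact div_nonpos_of_nonpos_of_nonneg
      (sub_nonpos.2 (integral_toReal_div_measure_fiber_le_one hf hq)) (log_nonneg one_le_two)
  have information_le : information P f ≤ᵐ[P] fun ω => c ω + (ratio ω - 1) / log 2 := by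
    filter_upwards [information_ae_le_of_tsum_le_one hq hpos, hqc] with ω hinf hω
    exact hinf.trans (add_le_add_left hω _)
  have hfin : HasFiniteEntropy P f := by
    refine Integrable.mono' (hc.add excess_integrable)
      (measurable_information hf).aestronglyMeasurable ?_
    filter_upwards [information_le] with ω hω
    rwa [Real.norm_of_nonneg (information_nonneg f ω)]
  refine ⟨hfin, ?_⟩
  calc entOf P f = ∫ ω, information P f ω ∂P := entOf_eq_integral_information hf
    _ ≤ ∫ ω, (c ω + (ratio ω - 1) / log 2) ∂P :=
        integral_mono_ae hfin (hc.add excess_integrable) information_le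
    _ = ∫ ω, c ω ∂P + ∫ ω, (ratio ω - 1) / log 2 ∂P := integral_add hc excess_integrable
    _ ≤ ∫ ω, c ω ∂P := add_le_of_nonpos_right excess_integral

lemma hasFiniteEntropy_and_entOf_le_of_forall_mem [IsProbabilityMeasure P] (hf : Measurable f)
    {D : Finset S} (hD : ∀ ω, f ω ∈ D) {m : ℕ} (hcard : D.card ≤ 2 ^ m) :
    HasFiniteEntropy P f ∧ entOf P f ≤ m := by
  classical
  have uniform_tsum : ∑' s, (if s ∈ D then ((2 : ℝ≥0∞) ^ m)⁻¹ else 0) ≤ 1 := by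
    rw [tsum_eq_sum (s := D) fun s hs => if_neg hs, Finset.sum_congr rfl fun s hs => if_pos hs,
      Finset.sum_const, nsmul_eq_mul, ← div_eq_mul_inv]
    exact ENNReal.div_le_of_le_mul (by rw [one_mul]; exact_mod_cast hcard)
  have uniform_log (ω : Ω) : -logb 2 (if f ω ∈ D then ((2 : ℝ≥0∞) ^ m)⁻¹ else 0).toReal = m := by
    rw [if_pos (hD ω), ENNReal.toReal_inv, logb_inv, neg_neg, ENNReal.toReal_pow,
      ENNReal.toReal_ofNat, logb_pow, logb_self_eq_one one_lt_two, mul_one]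
  simpa using gibbs_inequality (P := P) hf uniform_tsum (.of_forall fun ω => by simp [hD ω])
    (integrable_const (m : ℝ)) (.of_forall fun ω => (uniform_log ω).le)

end Gibbs

section Submodularity

variable {Ω S T U : Type*} [MeasurableSpace Ω] {P : Measure Ω} [IsProbabilityMeasure P]
  [Countable S] [MeasurableSpace S] [MeasurableSingletonClass S]
  [Countable T] [MeasurableSpace T] [MeasurableSingletonClass T]
  [Countable U] [MeasurableSpace U] [MeasurableSingletonClass U]
  {f : Ω → S} {g : Ω → T} {h : Ω → U}

lemma tsum_condIndep_le_one (hf : Measurable f) (hg : Measurable g) (hh : Measurable h) :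
    ∑' x : U × S × T, P ((fun ω => (h ω, f ω)) ⁻¹' {(x.1, x.2.1)}) *
      P ((fun ω => (h ω, g ω)) ⁻¹' {(x.1, x.2.2)}) / P (h ⁻¹' {x.1}) ≤ 1 := by
  calc _ = ∑' u, (∑' s, P ((fun ω => (h ω, f ω)) ⁻¹' {(u, s)})) *
          (∑' t, P ((fun ω => (h ω, g ω)) ⁻¹' {(u, t)})) / P (h ⁻¹' {u}) := by
        simp_rw [ENNReal.tsum_prod', div_eq_mul_inv, ENNReal.tsum_mul_right, ENNReal.tsum_mul_left,
          ENNReal.tsum_mul_right]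
    _ = ∑' u, P (h ⁻¹' {u}) * (P (h ⁻¹' {u}) / P (h ⁻¹' {u})) := by
        simp_rw [tsum_measure_fiber_prodMk hf, tsum_measure_fiber_prodMk hg, mul_div_assoc]
    _ ≤ ∑' u, P (h ⁻¹' {u}) :=
        ENNReal.tsum_le_tsum fun _ => mul_le_of_le_one_right' ENNReal.div_self_le_one
    _ = 1 := by rw [tsum_measure_fiber hh, measure_univ]

theorem entropy_submodularity (hf : Measurable f) (hg : Measurable g) (hh : Measurable h)
    (hhf : HasFiniteEntropy P fun ω => (h ω, f ω)) (hhg : HasFiniteEntropy P fun ω => (h ω, g ω)) :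
    HasFiniteEntropy P (fun ω => (h ω, f ω, g ω)) ∧
      entOf P (fun ω => (h ω, f ω, g ω)) + entOf P h ≤
        entOf P (fun ω => (h ω, f ω)) + entOf P (fun ω => (h ω, g ω)) := by
  let F (ω : Ω) : U × S := (h ω, f ω)
  let G (ω : Ω) : U × T := (h ω, g ω)
  -- `q` makes `f` and `g` conditionally independent given `h`, keeping the laws of `F` and `G`.
  let q (x : U × S × T) : ℝ≥0∞ :=
    P (F ⁻¹' {(x.1, x.2.1)}) * P (G ⁻¹' {(x.1, x.2.2)}) / P (h ⁻¹' {x.1})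
  have hh_fin : HasFiniteEntropy P h :=
    hhf.of_factorsThrough hh fun _ _ hF => congrArg Prod.fst hF
  have q_toReal (ω : Ω) : (q (h ω, f ω, g ω)).toReal =
      P.real (F ⁻¹' {F ω}) * P.real (G ⁻¹' {G ω}) / P.real (h ⁻¹' {h ω}) := by
    rw [ENNReal.toReal_div, ENNReal.toReal_mul]
    rfl
  have fibers_pos := (ae_measureReal_fiber_pos (P := P) F).and
    ((ae_measureReal_fiber_pos G).and (ae_measureReal_fiber_pos h))
  have q_ne_zero : ∀ᵐ ω ∂P, q (h ω, f ω, g ω) ≠ 0 := by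
    filter_upwards [fibers_pos] with ω ⟨hF, hG, hh⟩ hzero
    have := div_pos (mul_pos hF hG) hh
    rw [← q_toReal, hzero, ENNReal.toReal_zero] at this
    exact this.false
  have neg_logb_q : ∀ᵐ ω ∂P, -logb 2 (q (h ω, f ω, g ω)).toReal ≤
      information P F ω + information P G ω - information P h ω := by
    filter_upwards [fibers_pos] with ω ⟨hF, hG, hh⟩
    rw [q_toReal, logb_div (mul_pos hF hG).ne' hh.ne', logb_mul hF.ne' hG.ne']
    unfold information
    linarith
  obtain ⟨hfin, hle⟩ := gibbs_inequality (hh.prodMk (hf.prodMk hg))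
    (tsum_condIndep_le_one hf hg hh) q_ne_zero ((hhf.add hhg).sub hh_fin) neg_logb_q
  refine ⟨hfin, ?_⟩
  rw [entOf_eq_integral_information hh, entOf_eq_integral_information (hh.prodMk hf),
    entOf_eq_integral_information (hh.prodMk hg)]
  rw [integral_sub' (hhf.add hhg) hh_fin, integral_add' hhf hhg] at hle
  linarith

theorem entropy_submodularity_of_factorsThrough {V : Type*} [Countable V] [MeasurableSpace V]
    [MeasurableSingletonClass V] {k : Ω → V} (hf : Measurable f) (hg : Measurable g)
    (hh : Measurable h) (hk : Measurable k) (hf_fin : HasFiniteEntropy P f)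
    (hg_fin : HasFiniteEntropy P g) (hhf : h.FactorsThrough f) (hhg : h.FactorsThrough g)
    (hkfg : k.FactorsThrough fun ω => (f ω, g ω)) :
    entOf P k + entOf P h ≤ entOf P f + entOf P g := by
  have f_factors : f.FactorsThrough fun ω => (h ω, f ω) := fun _ _ e => congrArg Prod.snd e
  have hf_factors : (fun ω => (h ω, f ω)).FactorsThrough f := fun _ _ e => Prod.ext (hhf e) e
  have g_factors : g.FactorsThrough fun ω => (h ω, g ω) := fun _ _ e => congrArg Prod.snd e
  have hg_factors : (fun ω => (h ω, g ω)).FactorsThrough g := fun _ _ e => Prod.ext (hhg e) e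
  obtain ⟨hfg_fin, submodularity⟩ := entropy_submodularity hf hg hh
    (hf_fin.congr hf_factors f_factors) (hg_fin.congr hg_factors g_factors)
  rw [entOf_congr hf (hh.prodMk hf) hf_factors f_factors,
    entOf_congr hg (hh.prodMk hg) hg_factors g_factors] at submodularity
  have k_le := hfg_fin.entOf_le_of_factorsThrough (hh.prodMk (hf.prodMk hg)) hk
    fun _ _ e => hkfg (congrArg Prod.snd e)
  linarith

lemma entOf_const (a : S) : entOf P (fun _ => a) = 0 := by
  simp [entOf_eq_integral_information measurable_const, information]

theorem entropy_subadditivity (hf : Measurable f) (hg : Measurable g)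
    (hf_fin : HasFiniteEntropy P f) (hg_fin : HasFiniteEntropy P g) :
    HasFiniteEntropy P (fun ω => (f ω, g ω)) ∧
      entOf P (fun ω => (f ω, g ω)) ≤ entOf P f + entOf P g := by
  obtain ⟨hfin, hle⟩ := entropy_submodularity hf hg (measurable_const (a := ()))
    (hf_fin.congr (fun _ _ h => by simp [h]) fun _ _ h => by simpa using h)
    (hg_fin.congr (fun _ _ h => by simp [h]) fun _ _ h => by simpa using h)
  refine ⟨hfin.congr (fun _ _ h => by simpa using h) fun _ _ h => by simpa using h, ?_⟩
  rw [entOf_const, add_zero] at hle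
  simpa only [entOf_comp_injective P (Prod.mk_right_injective ())] using hle

end Submodularity

section Sums

variable {Ω G : Type*} [MeasurableSpace Ω] {P : Measure Ω} [IsProbabilityMeasure P]
  [AddCommGroup G] [Countable G] [MeasurableSpace G] [MeasurableSingletonClass G]

lemma HasFiniteEntropy.add {f g : Ω → G} (hf : Measurable f) (hg : Measurable g)
    (hf_fin : HasFiniteEntropy P f) (hg_fin : HasFiniteEntropy P g) :
    HasFiniteEntropy P fun ω => f ω + g ω :=
  (entropy_subadditivity hf hg hf_fin hg_fin).1.of_factorsThrough (hf.add hg)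
    (by intro ω ω' h; grind)

lemma HasFiniteEntropy.sub {f g : Ω → G} (hf : Measurable f) (hg : Measurable g)
    (hf_fin : HasFiniteEntropy P f) (hg_fin : HasFiniteEntropy P g) :
    HasFiniteEntropy P fun ω => f ω - g ω :=
  (entropy_subadditivity hf hg hf_fin hg_fin).1.of_factorsThrough (hf.sub hg)
    (by intro ω ω' h; grind)

lemma hasFiniteEntropy_and_abs_entOf_sub_le {f g : Ω → G} (hf : Measurable f) (hg : Measurable g)
    (hg_fin : HasFiniteEntropy P g) {D : Finset G} (hD : ∀ ω, f ω - g ω ∈ D) {m : ℕ}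
    (hcard : D.card ≤ 2 ^ m) :
    HasFiniteEntropy P f ∧ |entOf P f - entOf P g| ≤ m := by
  have hd : Measurable fun ω => f ω - g ω := hf.sub hg
  obtain ⟨hd_fin, hd_le⟩ := hasFiniteEntropy_and_entOf_le_of_forall_mem (P := P) hd hD hcard
  obtain ⟨hgd_fin, hgd_le⟩ := entropy_subadditivity hg hd hg_fin hd_fin
  have f_factors : f.FactorsThrough fun ω => (g ω, f ω - g ω) := by
    intro ω ω' h
    grind
  have g_factors : g.FactorsThrough fun ω => (f ω, f ω - g ω) := by
    intro ω ω' h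
    grind
  have hf_fin : HasFiniteEntropy P f := hgd_fin.of_factorsThrough hf f_factors
  obtain ⟨hfd_fin, hfd_le⟩ := entropy_subadditivity hf hd hf_fin hd_fin
  have f_le := hgd_fin.entOf_le_of_factorsThrough (hg.prodMk hd) hf f_factors
  have g_le := hfd_fin.entOf_le_of_factorsThrough (hf.prodMk hd) hg g_factors
  exact ⟨hf_fin, abs_sub_le_iff.2 ⟨by linarith, by linarith⟩⟩

lemma entOf_prodMk_le_entOf_add_add_entOf {f g : Ω → G} (hf : Measurable f) (hg : Measurable g)
    (hf_fin : HasFiniteEntropy P f) (hg_fin : HasFiniteEntropy P g) :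
    entOf P (fun ω => (f ω, g ω)) ≤ entOf P (fun ω => f ω + g ω) + entOf P g := by
  have hsum : Measurable fun ω => f ω + g ω := hf.add hg
  obtain ⟨hsum_g_fin, hsum_g_le⟩ := entropy_subadditivity hsum hg (hf_fin.add hf hg hg_fin) hg_fin
  refine (hsum_g_fin.entOf_le_of_factorsThrough (hsum.prodMk hg) (hf.prodMk hg) ?_).trans hsum_g_le
  intro ω ω' h
  simp only [Prod.mk.injEq] at h ⊢
  grind

variable {x y z : Ω → G} (hx : Measurable x) (hy : Measurable y) (hz : Measurable z)

include hx hy hz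

section Joint

variable (hxyz_fin : HasFiniteEntropy P fun ω => ((x ω, y ω), z ω))

include hxyz_fin

lemma entOf_triple_add_entOf_add_le :
    entOf P (fun ω => ((x ω, y ω), z ω)) + entOf P (fun ω => x ω + y ω + z ω) ≤
      entOf P (fun ω => (x ω, y ω + z ω)) + entOf P (fun ω => (y ω, x ω + z ω)) := by
  have hf : Measurable fun ω => (x ω, y ω + z ω) := hx.prodMk (hy.add hz)
  have hg : Measurable fun ω => (y ω, x ω + z ω) := hy.prodMk (hx.add hz)
  refine entropy_submodularity_of_factorsThrough hf hg ((hx.add hy).add hz)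
    ((hx.prodMk hy).prodMk hz) (hxyz_fin.of_factorsThrough hf ?_)
    (hxyz_fin.of_factorsThrough hg ?_) ?_ ?_ ?_
  all_goals
    intro ω ω' h
    simp only [Prod.mk.injEq] at h ⊢
    grind

lemma entOf_triple_add_entOf_sub_le :
    entOf P (fun ω => ((x ω, y ω), z ω)) + entOf P (fun ω => x ω - y ω) ≤
      entOf P (fun ω => (x ω, y ω)) + entOf P (fun ω => (x ω + z ω, y ω + z ω)) := by
  have hf : Measurable fun ω => (x ω, y ω) := hx.prodMk hy
  have hg : Measurable fun ω => (x ω + z ω, y ω + z ω) := (hx.add hz).prodMk (hy.add hz)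
  refine entropy_submodularity_of_factorsThrough hf hg (hx.sub hy) ((hx.prodMk hy).prodMk hz)
    (hxyz_fin.of_factorsThrough hf ?_) (hxyz_fin.of_factorsThrough hg ?_) ?_ ?_ ?_
  all_goals
    intro ω ω' h
    simp only [Prod.mk.injEq] at h ⊢
    grind

end Joint

theorem entOf_add_sub_le_of_indepFun (hx_fin : HasFiniteEntropy P x)
    (hy_fin : HasFiniteEntropy P y) (hz_fin : HasFiniteEntropy P z)
    (hxy : IndepFun x y P) (hxyz : IndepFun (fun ω => (x ω, y ω)) z P) :
    entOf P (fun ω => x ω + y ω + z ω) + entOf P z ≤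
        entOf P (fun ω => x ω + z ω) + entOf P (fun ω => y ω + z ω) ∧
      entOf P (fun ω => x ω + y ω) + entOf P z ≤
        entOf P (fun ω => x ω + z ω) + entOf P (fun ω => y ω + z ω) ∧
      entOf P (fun ω => x ω - y ω) + entOf P z ≤
        entOf P (fun ω => x ω + z ω) + entOf P (fun ω => y ω + z ω) := by
  have hxy_sum : Measurable fun ω => x ω + y ω := hx.add hy
  have hxz : Measurable fun ω => x ω + z ω := hx.add hz
  have hyz : Measurable fun ω => y ω + z ω := hy.add hz
  have hxy_fin := (entropy_subadditivity hx hy hx_fin hy_fin).1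
  have hxyz_fin := (entropy_subadditivity (hx.prodMk hy) hz hxy_fin hz_fin).1
  have hxz_fin := hx_fin.add hx hz hz_fin
  have hyz_fin := hy_fin.add hy hz hz_fin
  have pair_eq := entOf_prodMk_of_indepFun hx hy hx_fin hy_fin hxy
  have triple_eq := entOf_prodMk_of_indepFun (hx.prodMk hy) hz hxy_fin hz_fin hxyz
  have sum_le : entOf P (fun ω => x ω + y ω + z ω) + entOf P z ≤
      entOf P (fun ω => x ω + z ω) + entOf P (fun ω => y ω + z ω) := by
    have := entOf_triple_add_entOf_add_le hx hy hz hxyz_fin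
    have := (entropy_subadditivity hx hyz hx_fin hyz_fin).2
    have := (entropy_subadditivity hy hxz hy_fin hxz_fin).2
    linarith
  refine ⟨sum_le, ?_, ?_⟩
  · have indep_add : IndepFun (fun ω => x ω + y ω) z P :=
      hxyz.comp (measurable_fst.add measurable_snd) measurable_id
    have hxy_sum_fin := hx_fin.add hx hy hy_fin
    have := entOf_prodMk_of_indepFun hxy_sum hz hxy_sum_fin hz_fin indep_add
    have := entOf_prodMk_le_entOf_add_add_entOf hxy_sum hz hxy_sum_fin hz_fin
    linarith
  · have := entOf_triple_add_entOf_sub_le hx hy hz hxyz_fin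
    have := (entropy_subadditivity hxz hyz hxz_fin hyz_fin).2
    linarith

end Sums

section Discretization

/-- The integer `⌊2ⁿ x⌋`, which determines and is determined by `Dn n x`. Unlike the dyadic
rationals `Dn n x`, it takes values in a countable type. -/
noncomputable def dyadicIndex (n : ℕ) (x : ℝ) : ℤ :=
  ⌊(2 : ℝ) ^ n * x⌋

lemma measurable_dyadicIndex (n : ℕ) : Measurable (dyadicIndex n) :=
  Int.measurable_floor.comp (measurable_const_mul _)

lemma injective_intCast_div_two_pow (n : ℕ) :
    Function.Injective fun k : ℤ => (k : ℝ) / (2 : ℝ) ^ n :=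
  fun _ _ h => Int.cast_injective ((div_left_inj' (by positivity)).1 h)

variable {Ω : Type*} [MeasurableSpace Ω]

lemma Hn_eq_entOf_dyadicIndex (P : Measure Ω) (n : ℕ) (X : Ω → ℝ) :
    Hn P n X = entOf P (fun ω => dyadicIndex n (X ω)) :=
  entOf_comp_injective P (injective_intCast_div_two_pow n) _

lemma hasFiniteEntropy_Dn_iff {P : Measure Ω} {n : ℕ} {X : Ω → ℝ} :
    HasFiniteEntropy P (fun ω => Dn n (X ω)) ↔ HasFiniteEntropy P fun ω => dyadicIndex n (X ω) := by
  have index_factors : (fun ω => dyadicIndex n (X ω)).FactorsThrough fun ω => Dn n (X ω) :=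
    fun _ _ h => injective_intCast_div_two_pow n h
  have Dn_factors : (fun ω => Dn n (X ω)).FactorsThrough fun ω => dyadicIndex n (X ω) :=
    fun _ _ h => congrArg (fun k : ℤ => (k : ℝ) / 2 ^ n) h
  exact ⟨fun h => h.congr index_factors Dn_factors, fun h => h.congr Dn_factors index_factors⟩

lemma dyadicIndex_add_sub_mem (n : ℕ) (a b : ℝ) :
    dyadicIndex n (a + b) - (dyadicIndex n a + dyadicIndex n b) ∈ Finset.Icc (0 : ℤ) 1 := by
  have lower := Int.le_floor_add ((2 : ℝ) ^ n * a) (2 ^ n * b)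
  have upper := Int.le_floor_add_floor ((2 : ℝ) ^ n * a) (2 ^ n * b)
  simp only [dyadicIndex, mul_add, Finset.mem_Icc]
  omega

lemma dyadicIndex_sub_sub_mem (n : ℕ) (a b : ℝ) :
    dyadicIndex n (a - b) - (dyadicIndex n a - dyadicIndex n b) ∈ Finset.Icc (-1 : ℤ) 0 := by
  have := dyadicIndex_add_sub_mem n (a - b) b
  rw [sub_add_cancel, Finset.mem_Icc] at this
  rw [Finset.mem_Icc]
  omega

lemma dyadicIndex_add_add_sub_mem (n : ℕ) (a b c : ℝ) :
    dyadicIndex n (a + b + c) - (dyadicIndex n a + dyadicIndex n b + dyadicIndex n c) ∈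
      Finset.Icc (0 : ℤ) 2 := by
  have hab := Finset.mem_Icc.1 (dyadicIndex_add_sub_mem n a b)
  have habc := Finset.mem_Icc.1 (dyadicIndex_add_sub_mem n (a + b) c)
  rw [Finset.mem_Icc]
  omega

variable {P : Measure Ω} [IsProbabilityMeasure P]

lemma hasFiniteEntropy_Dn_of_abs_le {X : Ω → ℝ} (hX : Measurable X) {c : ℝ}
    (hc : ∀ ω, |X ω| ≤ c) (n : ℕ) : HasFiniteEntropy P fun ω => Dn n (X ω) := by
  have index_mem (ω : Ω) : dyadicIndex n (X ω) ∈
      Finset.Icc (dyadicIndex n (-c)) (dyadicIndex n c) := by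
    have := abs_le.1 (hc ω)
    exact Finset.mem_Icc.2 ⟨Int.floor_mono (by gcongr; exact this.1),
      Int.floor_mono (by gcongr; exact this.2)⟩
  exact hasFiniteEntropy_Dn_iff.2 (hasFiniteEntropy_and_entOf_le_of_forall_mem
    ((measurable_dyadicIndex n).comp hX) index_mem Nat.lt_two_pow_self.le).1

variable {X Y Z : Ω → ℝ}

lemma abs_Hn_add_sub_le (hX : Measurable X) (hY : Measurable Y) {n : ℕ}
    (hX_fin : HasFiniteEntropy P fun ω => dyadicIndex n (X ω))
    (hY_fin : HasFiniteEntropy P fun ω => dyadicIndex n (Y ω)) :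
    |Hn P n (fun ω => X ω + Y ω) -
      entOf P (fun ω => dyadicIndex n (X ω) + dyadicIndex n (Y ω))| ≤ 1 := by
  have hx := (measurable_dyadicIndex n).comp hX
  have hy := (measurable_dyadicIndex n).comp hY
  rw [Hn_eq_entOf_dyadicIndex]
  exact_mod_cast (hasFiniteEntropy_and_abs_entOf_sub_le
    ((measurable_dyadicIndex n).comp (hX.add hY)) (hx.add hy) (hX_fin.add hx hy hY_fin)
    (fun ω => dyadicIndex_add_sub_mem n (X ω) (Y ω)) (m := 1) (by decide)).2

lemma abs_Hn_sub_sub_le (hX : Measurable X) (hY : Measurable Y) {n : ℕ}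
    (hX_fin : HasFiniteEntropy P fun ω => dyadicIndex n (X ω))
    (hY_fin : HasFiniteEntropy P fun ω => dyadicIndex n (Y ω)) :
    |Hn P n (fun ω => X ω - Y ω) -
      entOf P (fun ω => dyadicIndex n (X ω) - dyadicIndex n (Y ω))| ≤ 1 := by
  have hx := (measurable_dyadicIndex n).comp hX
  have hy := (measurable_dyadicIndex n).comp hY
  rw [Hn_eq_entOf_dyadicIndex]
  exact_mod_cast (hasFiniteEntropy_and_abs_entOf_sub_le
    ((measurable_dyadicIndex n).comp (hX.sub hY)) (hx.sub hy) (hX_fin.sub hx hy hY_fin)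
    (fun ω => dyadicIndex_sub_sub_mem n (X ω) (Y ω)) (m := 1) (by decide)).2

lemma abs_Hn_add_add_sub_le (hX : Measurable X) (hY : Measurable Y) (hZ : Measurable Z) {n : ℕ}
    (hX_fin : HasFiniteEntropy P fun ω => dyadicIndex n (X ω))
    (hY_fin : HasFiniteEntropy P fun ω => dyadicIndex n (Y ω))
    (hZ_fin : HasFiniteEntropy P fun ω => dyadicIndex n (Z ω)) :
    |Hn P n (fun ω => X ω + Y ω + Z ω) - entOf P (fun ω =>
      dyadicIndex n (X ω) + dyadicIndex n (Y ω) + dyadicIndex n (Z ω))| ≤ 2 := by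
  have hx := (measurable_dyadicIndex n).comp hX
  have hy := (measurable_dyadicIndex n).comp hY
  have hz := (measurable_dyadicIndex n).comp hZ
  rw [Hn_eq_entOf_dyadicIndex]
  exact_mod_cast (hasFiniteEntropy_and_abs_entOf_sub_le
    ((measurable_dyadicIndex n).comp ((hX.add hY).add hZ)) ((hx.add hy).add hz)
    ((hX_fin.add hx hy hY_fin).add (hx.add hy) hz hZ_fin)
    (fun ω => dyadicIndex_add_add_sub_mem n (X ω) (Y ω) (Z ω)) (m := 2) (by decide)).2

theorem entropy_sum_triple_bound_general (hX : Measurable X) (hY : Measurable Y)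
    (hZ : Measurable Z) (hXY : IndepFun X Y P) (hXYZ : IndepFun (fun ω => (X ω, Y ω)) Z P) {n : ℕ}
    (hX_fin : HasFiniteEntropy P fun ω => Dn n (X ω))
    (hY_fin : HasFiniteEntropy P fun ω => Dn n (Y ω))
    (hZ_fin : HasFiniteEntropy P fun ω => Dn n (Z ω)) :
    Hn P n (fun ω => X ω + Y ω + Z ω) ≤
        Hn P n (fun ω => X ω + Z ω) + Hn P n (fun ω => Y ω + Z ω) - Hn P n Z + 4 ∧
      Hn P n (fun ω => X ω + Y ω) ≤
        Hn P n (fun ω => X ω + Z ω) + Hn P n (fun ω => Y ω + Z ω) - Hn P n Z + 4 ∧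
      Hn P n (fun ω => X ω - Y ω) ≤
        Hn P n (fun ω => X ω + Z ω) + Hn P n (fun ω => Y ω + Z ω) - Hn P n Z + 4 := by
  rw [hasFiniteEntropy_Dn_iff] at hX_fin hY_fin hZ_fin
  have index_measurable := measurable_dyadicIndex n
  have indices_indep : IndepFun (fun ω => (dyadicIndex n (X ω), dyadicIndex n (Y ω)))
      (fun ω => dyadicIndex n (Z ω)) P :=
    hXYZ.comp (index_measurable.prodMap index_measurable) index_measurable
  obtain ⟨sum_le, add_le, sub_le⟩ := entOf_add_sub_le_of_indepFun (index_measurable.comp hX)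
    (index_measurable.comp hY) (index_measurable.comp hZ) hX_fin hY_fin hZ_fin
    (hXY.comp index_measurable index_measurable) indices_indep
  have sum_close := abs_le.1 (abs_Hn_add_add_sub_le hX hY hZ hX_fin hY_fin hZ_fin)
  have add_close := abs_le.1 (abs_Hn_add_sub_le hX hY hX_fin hY_fin)
  have sub_close := abs_le.1 (abs_Hn_sub_sub_le hX hY hX_fin hY_fin)
  have hXZ_close := abs_le.1 (abs_Hn_add_sub_le hX hZ hX_fin hZ_fin)
  have hYZ_close := abs_le.1 (abs_Hn_add_sub_le hY hZ hY_fin hZ_fin)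
  have hZ_eq : Hn P n Z = entOf P (dyadicIndex n ∘ Z) := Hn_eq_entOf_dyadicIndex P n Z
  simp only [Function.comp_apply] at sum_le add_le sub_le
  refine ⟨?_, ?_, ?_⟩ <;> linarith

end Discretization

/-- Lemma (Plünnecke–Ruzsa-type inequalities for discretized entropy): there is an absolute
constant `A > 0` such that for all mutually independent real random variables `X, Y, Z` with
bounded ranges and all `n`: (a) `Hₙ(X+Y+Z) ≤ Hₙ(X+Z) + Hₙ(Y+Z) − Hₙ(Z) + A`;
(b) `Hₙ(X+Y) ≤ Hₙ(X+Z) + Hₙ(Y+Z) − Hₙ(Z) + A`;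
(c) `Hₙ(X−Y) ≤ Hₙ(X+Z) + Hₙ(Y+Z) − Hₙ(Z) + A`. -/
theorem entropy_sum_triple_bound :
    ∃ A : ℝ, 0 < A ∧
      ∀ (Ω : Type) (mΩ : MeasurableSpace Ω) (P : Measure Ω),
        IsProbabilityMeasure P →
        ∀ (X Y Z : Ω → ℝ), Measurable X → Measurable Y → Measurable Z →
          IndepFun X Y P →
          IndepFun (fun ω => (X ω, Y ω)) Z P →
          ∀ c : ℝ, (∀ ω, |X ω| ≤ c ∧ |Y ω| ≤ c ∧ |Z ω| ≤ c) →
            ∀ n : ℕ,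
              Hn P n (fun ω => X ω + Y ω + Z ω) ≤
                  Hn P n (fun ω => X ω + Z ω) + Hn P n (fun ω => Y ω + Z ω) -
                    Hn P n Z + A ∧
              Hn P n (fun ω => X ω + Y ω) ≤
                  Hn P n (fun ω => X ω + Z ω) + Hn P n (fun ω => Y ω + Z ω) -
                    Hn P n Z + A ∧
              Hn P n (fun ω => X ω - Y ω) ≤
                  Hn P n (fun ω => X ω + Z ω) + Hn P n (fun ω => Y ω + Z ω) -
                    Hn P n Z + A :=
  ⟨4, by norm_num, fun _ _ _ _ _ _ _ hX hY hZ hXY hXYZ _ hc n =>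
    entropy_sum_triple_bound_general hX hY hZ hXY hXYZ
      (hasFiniteEntropy_Dn_of_abs_le hX (fun ω => (hc ω).1) n)
      (hasFiniteEntropy_Dn_of_abs_le hY (fun ω => (hc ω).2.1) n)
      (hasFiniteEntropy_Dn_of_abs_le hZ (fun ω => (hc ω).2.2) n)⟩
end

section
/- Let (X, Y) be a bivariate real random variable that is conditionally (s₁, C₁; s₂, C₂)-Frostman, where 0 ≤ s₁, s₂ ≤ 1 and C₁, C₂ > 0, and let a, b, c, d ∈ ℝ. Then: (i) there exist constants K₁ = K₁(a, b) > 0 and K₂ = K₂(a, b) > 0 such that aX + bY is (s₁, K₁·C₁)-Frostman whenever a ≠ 0, and (s₂, K₂·C₂)-Frostman whenever b ≠ 0; (ii) if ad − bc ≠ 0, there exists a constant K = K(a, b, c, d) > 0 such that (aX + bY, cX + dY) is jointly (s₁, s₂, K·C₁C₂)-Frostman whenever ad ≠ 0, and jointly (s₂, s₁, K·C₁C₂)-Frostman whenever bc ≠ 0. -/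
open MeasureTheory ProbabilityTheory Real

/-- `X` is `(s,C)`-Frostman: `P(X ∈ B(z,r)) ≤ C r^s` for every ball. -/
def Frostman {Ω : Type*} [MeasurableSpace Ω] {E : Type*} [PseudoMetricSpace E]
    (P : Measure Ω) (X : Ω → E) (s C : ℝ) : Prop :=
  ∀ (z : E) (r : ℝ), 0 < r → (P (X ⁻¹' Metric.ball z r)).toReal ≤ C * r ^ s

/-- `X` is `(s,C)`-Frostman given `Y`:
`P(X ∈ B(x,r), Y ∈ E) ≤ C r^s P(Y ∈ E)` for all balls and Borel sets. -/
def FrostmanGiven {Ω : Type*} [MeasurableSpace Ω] (P : Measure Ω) (X Y : Ω → ℝ)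
    (s C : ℝ) : Prop :=
  ∀ (x r : ℝ), 0 < r → ∀ E : Set ℝ, MeasurableSet E →
    (P (X ⁻¹' Metric.ball x r ∩ Y ⁻¹' E)).toReal ≤ C * r ^ s * (P (Y ⁻¹' E)).toReal

/-- `(X,Y)` is jointly `(s₁,s₂,C)`-Frostman. -/
def JointlyFrostman {Ω : Type*} [MeasurableSpace Ω] (P : Measure Ω) (X Y : Ω → ℝ)
    (s₁ s₂ C : ℝ) : Prop :=
  ∀ (x y r₁ r₂ : ℝ), 0 < r₁ → 0 < r₂ →
    (P (X ⁻¹' Metric.ball x r₁ ∩ Y ⁻¹' Metric.ball y r₂)).toReal ≤ C * r₁ ^ s₁ * r₂ ^ s₂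

/-!
Slice along the level sets of `g ∘ Y` at scale `δ`: on each slice the event `X + g(Y) ∈ B(z, r)`
forces `X` into a ball of radius `r + δ` with a fixed centre, so summing over slices and letting
`δ → 0` shows that adding a function of `Y` to `X` does not affect the Frostman condition given `Y`.
In particular `U = aX + bY` is Frostman given `Y`, whence (i).
For (ii), put `V = cX + dY` and `D = ad - bc`. When `r₁ ≤ r₂`, the event `U ∈ B(x, r₁)`,
`V ∈ B(y, r₂)` confines `Y = (aV - cU) / D` to a ball of radius comparable to `r₂`, and the joint
bound for `(U, Y)` applies; when `r₂ ≤ r₁` the pair `(V, X)` is used in the same way.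
-/

lemma rpow_le_max_one {t s : ℝ} (ht : 0 ≤ t) (hs : s ∈ Set.Icc 0 1) : t ^ s ≤ max 1 t :=
  calc t ^ s ≤ max 1 t ^ s := rpow_le_rpow ht (le_max_right 1 t) hs.1
    _ ≤ max 1 t := rpow_le_self_of_one_le (le_max_left 1 t) hs.2

section Fibers

variable {Ω ι : Type*} [MeasurableSpace Ω] [MeasurableSpace ι] [Countable ι]
  [MeasurableSingletonClass ι] {P : Measure Ω} [IsFiniteMeasure P] {N : Ω → ι}

lemma hasSum_toReal_measure_inter_fiber (hN : Measurable N) (A : Set Ω) :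
    HasSum (fun k ↦ (P (A ∩ N ⁻¹' {k})).toReal) (P A).toReal := by
  have hfiber (k : ι) : MeasurableSet (N ⁻¹' {k}) := hN (measurableSet_singleton k)
  have htsum : ∑' k, P (A ∩ N ⁻¹' {k}) = P A :=
    calc ∑' k, P (A ∩ N ⁻¹' {k}) = ∑' k, P.restrict A (N ⁻¹' {k}) := by
          simp only [Measure.restrict_apply (hfiber _), Set.inter_comm]
      _ = P.restrict A (⋃ k, N ⁻¹' {k}) :=
          (measure_iUnion (pairwise_disjoint_fiber N) hfiber).symm
      _ = P A := by
          rw [← Set.preimage_iUnion, Set.iUnion_of_singleton, Set.preimage_univ,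
            Measure.restrict_apply_univ]
  rw [← htsum, ENNReal.tsum_toReal_eq fun _ ↦ measure_ne_top P _]
  exact ENNReal.hasSum_toReal (htsum ▸ measure_ne_top P A)

lemma toReal_measure_le_mul_of_fiber (hN : Measurable N) {A B : Set Ω} {D : ℝ}
    (h : ∀ k, (P (A ∩ N ⁻¹' {k})).toReal ≤ D * (P (B ∩ N ⁻¹' {k})).toReal) :
    (P A).toReal ≤ D * (P B).toReal :=
  hasSum_le h (hasSum_toReal_measure_inter_fiber hN A)
    ((hasSum_toReal_measure_inter_fiber hN B).mul_left D)

end Fibers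

lemma preimage_add_ball_inter_floor_subset {Ω : Type*} (X Z : Ω → ℝ) (z r : ℝ) {δ : ℝ}
    (hδ : 0 < δ) (k : ℤ) :
    (fun ω ↦ X ω + Z ω) ⁻¹' Metric.ball z r ∩ (fun ω ↦ ⌊Z ω / δ⌋) ⁻¹' {k} ⊆
      X ⁻¹' Metric.ball (z - k * δ) (r + δ) := by
  rintro ω ⟨hsum, hfloor⟩
  obtain ⟨hlower, hupper⟩ := Int.floor_eq_iff.mp hfloor
  rw [le_div_iff₀ hδ] at hlower
  rw [div_lt_iff₀ hδ] at hupper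
  simp only [Set.mem_preimage, Metric.mem_ball, dist_eq, abs_lt] at hsum ⊢
  constructor <;> linarith

section Conditional

variable {Ω : Type*} [MeasurableSpace Ω] {P : Measure Ω} {X Y : Ω → ℝ} {s C : ℝ}

lemma FrostmanGiven.const_nonneg [NeZero P] [IsFiniteMeasure P] (h : FrostmanGiven P X Y s C) :
    0 ≤ C := by
  have hunit := h 0 1 one_pos Set.univ MeasurableSet.univ
  rw [one_rpow, mul_one, Set.preimage_univ] at hunit
  exact nonneg_of_mul_nonneg_left (ENNReal.toReal_nonneg.trans hunit) measureReal_univ_pos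

lemma FrostmanGiven.frostman [IsProbabilityMeasure P] (h : FrostmanGiven P X Y s C) :
    Frostman P X s C := fun x r hr ↦ by
  simpa using h x r hr Set.univ MeasurableSet.univ

lemma FrostmanGiven.const_mul (h : FrostmanGiven P X Y s C) {a : ℝ} (ha : a ≠ 0) :
    FrostmanGiven P (fun ω ↦ a * X ω) Y s (|a|⁻¹ ^ s * C) := fun x r hr E hE ↦ by
  have hball : (fun ω ↦ a * X ω) ⁻¹' Metric.ball x r = X ⁻¹' Metric.ball (a⁻¹ * x) (|a|⁻¹ * r) := by
    ext ω
    have hdist : dist (X ω) (a⁻¹ * x) = |a|⁻¹ * dist (a * X ω) x := by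
      rw [dist_eq, dist_eq, ← abs_inv, ← abs_mul, mul_sub, inv_mul_cancel_left₀ ha]
    have ha' : 0 < |a|⁻¹ := by positivity
    simp only [Set.mem_preimage, Metric.mem_ball, hdist, mul_lt_mul_iff_right₀ ha']
  calc (P ((fun ω ↦ a * X ω) ⁻¹' Metric.ball x r ∩ Y ⁻¹' E)).toReal
      ≤ C * (|a|⁻¹ * r) ^ s * (P (Y ⁻¹' E)).toReal := hball ▸ h _ _ (by positivity) E hE
    _ = |a|⁻¹ ^ s * C * r ^ s * (P (Y ⁻¹' E)).toReal := by
        rw [mul_rpow (by positivity) hr.le]; ring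

variable [IsFiniteMeasure P]

lemma FrostmanGiven.toReal_measure_add_comp_le (h : FrostmanGiven P X Y s C) (hY : Measurable Y)
    {g : ℝ → ℝ} (hg : Measurable g) (z : ℝ) {r δ : ℝ} (hr : 0 < r) (hδ : 0 < δ) {E : Set ℝ}
    (hE : MeasurableSet E) :
    (P ((fun ω ↦ X ω + g (Y ω)) ⁻¹' Metric.ball z r ∩ Y ⁻¹' E)).toReal ≤
      C * (r + δ) ^ s * (P (Y ⁻¹' E)).toReal := by
  have hfloor : Measurable fun y ↦ ⌊g y / δ⌋ := (hg.div_const δ).floor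
  refine toReal_measure_le_mul_of_fiber (hfloor.comp hY) fun k ↦ ?_
  have hslice := preimage_add_ball_inter_floor_subset X (g ∘ Y) z r hδ k
  calc _ ≤ (P (X ⁻¹' Metric.ball (z - k * δ) (r + δ) ∩
          Y ⁻¹' (E ∩ (fun y ↦ ⌊g y / δ⌋) ⁻¹' {k}))).toReal :=
        ENNReal.toReal_mono (measure_ne_top P _) <| measure_mono
          fun _ hω ↦ ⟨hslice ⟨hω.1.1, hω.2⟩, hω.1.2, hω.2⟩
    _ ≤ _ := h _ _ (by positivity) _ (hE.inter (hfloor (measurableSet_singleton k)))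

lemma FrostmanGiven.add_comp (h : FrostmanGiven P X Y s C) (hY : Measurable Y) {g : ℝ → ℝ}
    (hg : Measurable g) : FrostmanGiven P (fun ω ↦ X ω + g (Y ω)) Y s C := by
  intro z r hr E hE
  have hcont : ContinuousAt (fun δ ↦ C * (r + δ) ^ s * (P (Y ⁻¹' E)).toReal) 0 :=
    (((continuousAt_const.add continuousAt_id).rpow_const (.inl (by simpa using hr.ne'))).const_mul
      C).mul_const _
  have hlim := hcont.tendsto.mono_left (nhdsWithin_le_nhds (s := Set.Ioi 0))
  rw [add_zero] at hlim
  refine ge_of_tendsto hlim (eventually_mem_nhdsWithin.mono fun δ hδ ↦ ?_)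
  exact h.toReal_measure_add_comp_le hY hg z hr hδ hE

lemma FrostmanGiven.linear_comb (h : FrostmanGiven P X Y s C) (hY : Measurable Y)
    {a : ℝ} (ha : a ≠ 0) (b : ℝ) :
    FrostmanGiven P (fun ω ↦ a * X ω + b * Y ω) Y s (|a|⁻¹ ^ s * C) :=
  (h.const_mul ha).add_comp hY (measurable_const_mul b)

end Conditional

section Joint

variable {Ω : Type*} [MeasurableSpace Ω] {P : Measure Ω} {X Y U V Z : Ω → ℝ}
  {s₁ s₂ C₁ C₂ C : ℝ}

lemma JointlyFrostman.mono_const (h : JointlyFrostman P X Y s₁ s₂ C₁) (hC : C₁ ≤ C) :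
    JointlyFrostman P X Y s₁ s₂ C :=
  fun x y r₁ r₂ hr₁ hr₂ ↦ (h x y r₁ r₂ hr₁ hr₂).trans (by gcongr)

lemma FrostmanGiven.jointlyFrostman [NeZero P] [IsFiniteMeasure P]
    (hX : FrostmanGiven P X Y s₁ C₁) (hY : Frostman P Y s₂ C₂) :
    JointlyFrostman P X Y s₁ s₂ (C₁ * C₂) := fun x y r₁ r₂ hr₁ hr₂ ↦ by
  have hC₁ := hX.const_nonneg
  calc (P (X ⁻¹' Metric.ball x r₁ ∩ Y ⁻¹' Metric.ball y r₂)).toReal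
      ≤ C₁ * r₁ ^ s₁ * (P (Y ⁻¹' Metric.ball y r₂)).toReal := hX x r₁ hr₁ _ measurableSet_ball
    _ ≤ C₁ * r₁ ^ s₁ * (C₂ * r₂ ^ s₂) := by gcongr; exact hY y r₂ hr₂
    _ = C₁ * C₂ * r₁ ^ s₁ * r₂ ^ s₂ := by ring

lemma JointlyFrostman.toReal_measure_inter_le_of_eq_linear_comb [IsFiniteMeasure P]
    (h : JointlyFrostman P U Z s₁ s₂ C) {α β : ℝ} (hβ : β ≠ 0)
    (hZ : ∀ ω, Z ω = α * U ω + β * V ω) (x y : ℝ) {r₁ r₂ : ℝ} (hr₁ : 0 < r₁) (hr : r₁ ≤ r₂) :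
    (P (U ⁻¹' Metric.ball x r₁ ∩ V ⁻¹' Metric.ball y r₂)).toReal ≤
      (|α| + |β|) ^ s₂ * C * r₁ ^ s₁ * r₂ ^ s₂ := by
  have hr₂ : 0 < r₂ := hr₁.trans_le hr
  have hsub : U ⁻¹' Metric.ball x r₁ ∩ V ⁻¹' Metric.ball y r₂ ⊆
      U ⁻¹' Metric.ball x r₁ ∩ Z ⁻¹' Metric.ball (α * x + β * y) ((|α| + |β|) * r₂) := by
    rintro ω ⟨hU, hV⟩
    refine ⟨hU, ?_⟩
    simp only [Set.mem_preimage, Metric.mem_ball, dist_eq] at hU hV ⊢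
    calc |Z ω - (α * x + β * y)| = |α * (U ω - x) + β * (V ω - y)| := by rw [hZ]; ring_nf
      _ ≤ |α| * |U ω - x| + |β| * |V ω - y| := by
          simpa only [abs_mul] using abs_add_le (α * (U ω - x)) (β * (V ω - y))
      _ < |α| * r₂ + |β| * r₂ := add_lt_add_of_le_of_lt
          (by gcongr; exact hU.le.trans hr) (by gcongr)
      _ = (|α| + |β|) * r₂ := by ring
  calc (P (U ⁻¹' Metric.ball x r₁ ∩ V ⁻¹' Metric.ball y r₂)).toReal
      ≤ C * r₁ ^ s₁ * ((|α| + |β|) * r₂) ^ s₂ :=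
        (ENNReal.toReal_mono (measure_ne_top P _) (measure_mono hsub)).trans
          (h _ _ _ _ hr₁ (by positivity))
    _ = (|α| + |β|) ^ s₂ * C * r₁ ^ s₁ * r₂ ^ s₂ := by
        rw [mul_rpow (by positivity) hr₂.le]; ring

end Joint

section Linear

variable {Ω : Type*} [MeasurableSpace Ω] {P : Measure Ω} [IsProbabilityMeasure P] {X Y : Ω → ℝ}
  {s s₁ s₂ C C₁ C₂ a b c d : ℝ}

lemma FrostmanGiven.frostman_linear_comb (h : FrostmanGiven P X Y s C) (hY : Measurable Y)
    (hs : s ∈ Set.Icc 0 1) (ha : a ≠ 0) (b : ℝ) :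
    Frostman P (fun ω ↦ a * X ω + b * Y ω) s (max 1 |a|⁻¹ * C) := fun x r hr ↦ by
  have hC := h.const_nonneg
  calc (P ((fun ω ↦ a * X ω + b * Y ω) ⁻¹' Metric.ball x r)).toReal
      ≤ |a|⁻¹ ^ s * C * r ^ s := (h.linear_comb hY ha b).frostman x r hr
    _ ≤ max 1 |a|⁻¹ * C * r ^ s := by
        gcongr
        exact rpow_le_max_one (by positivity) hs

/-- With `U = aX + bY` and `V = cX + dY`, the constant, uniform in the exponents `0 ≤ s₁, s₂ ≤ 1`,
multiplying `C₁C₂` in the joint bound for `(U, V)` on balls of radii `r₁ ≤ r₂`. The first factor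
comes from rescaling `X` by `a`, the second from `Y = (aV - cU) / (ad - bc)`. -/
noncomputable def distortion (a b c d : ℝ) : ℝ :=
  max 1 |a|⁻¹ * max 1 ((|a| + |c|) / |a * d - b * c|)

lemma distortion_pos (a b c d : ℝ) : 0 < distortion a b c d := by
  unfold distortion; positivity

lemma FrostmanGiven.toReal_measure_inter_linear_comb_le (hXY : FrostmanGiven P X Y s₁ C₁)
    (hYX : FrostmanGiven P Y X s₂ C₂) (hY : Measurable Y) (hs₁ : s₁ ∈ Set.Icc 0 1)
    (hs₂ : s₂ ∈ Set.Icc 0 1) (ha : a ≠ 0) (hD : a * d - b * c ≠ 0) (x y : ℝ)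
    {r₁ r₂ : ℝ} (hr₁ : 0 < r₁) (hr : r₁ ≤ r₂) :
    (P ((fun ω ↦ a * X ω + b * Y ω) ⁻¹' Metric.ball x r₁ ∩
      (fun ω ↦ c * X ω + d * Y ω) ⁻¹' Metric.ball y r₂)).toReal ≤
      distortion a b c d * (C₁ * C₂) * r₁ ^ s₁ * r₂ ^ s₂ := by
  set D := a * d - b * c with hD_def
  have hr₂ : 0 < r₂ := hr₁.trans_le hr
  have hC₁ := hXY.const_nonneg
  have hC₂ := hYX.const_nonneg
  have hUY := (hXY.linear_comb hY ha b).jointlyFrostman hYX.frostman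
  have hinv (ω : Ω) : Y ω = -c / D * (a * X ω + b * Y ω) + a / D * (c * X ω + d * Y ω) := by
    field_simp
    rw [hD_def]
    ring
  have hnorm : |-c / D| + |a / D| = (|a| + |c|) / |D| := by
    rw [abs_div, abs_div, abs_neg, ← add_div, add_comm]
  calc _ ≤ (|-c / D| + |a / D|) ^ s₂ * (|a|⁻¹ ^ s₁ * C₁ * C₂) * r₁ ^ s₁ * r₂ ^ s₂ :=
        hUY.toReal_measure_inter_le_of_eq_linear_comb (div_ne_zero ha hD) hinv x y hr₁ hr
    _ = |a|⁻¹ ^ s₁ * ((|a| + |c|) / |D|) ^ s₂ * (C₁ * C₂) * r₁ ^ s₁ * r₂ ^ s₂ := by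
        rw [hnorm]; ring
    _ ≤ distortion a b c d * (C₁ * C₂) * r₁ ^ s₁ * r₂ ^ s₂ := by
        unfold distortion
        gcongr
        · exact rpow_le_max_one (by positivity) hs₁
        · exact rpow_le_max_one (by positivity) hs₂

lemma FrostmanGiven.jointlyFrostman_linear_comb (hXY : FrostmanGiven P X Y s₁ C₁)
    (hYX : FrostmanGiven P Y X s₂ C₂) (hX : Measurable X) (hY : Measurable Y)
    (hs₁ : s₁ ∈ Set.Icc 0 1) (hs₂ : s₂ ∈ Set.Icc 0 1) (ha : a ≠ 0) (hd : d ≠ 0)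
    (hD : a * d - b * c ≠ 0) :
    JointlyFrostman P (fun ω ↦ a * X ω + b * Y ω) (fun ω ↦ c * X ω + d * Y ω) s₁ s₂
      (max (distortion a b c d) (distortion d c b a) * (C₁ * C₂)) := by
  intro x y r₁ r₂ hr₁ hr₂
  have hC₁ := hXY.const_nonneg
  have hC₂ := hYX.const_nonneg
  rcases le_total r₁ r₂ with hr | hr
  · refine (hXY.toReal_measure_inter_linear_comb_le hYX hY hs₁ hs₂ ha hD x y hr₁ hr).trans ?_
    gcongr
    exact le_max_left _ _
  · have hD' : d * a - c * b ≠ 0 := by rwa [mul_comm d, mul_comm c]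
    have hswap := hYX.toReal_measure_inter_linear_comb_le hXY hX hs₂ hs₁ hd hD' y x hr₂ hr
    simp only [add_comm (d * _), add_comm (b * _)] at hswap
    calc _ ≤ distortion d c b a * (C₂ * C₁) * r₂ ^ s₂ * r₁ ^ s₁ := Set.inter_comm _ _ ▸ hswap
      _ = distortion d c b a * (C₁ * C₂) * r₁ ^ s₁ * r₂ ^ s₂ := by ring
      _ ≤ _ := by gcongr; exact le_max_right _ _

end Linear

/-- Lemma (Frostman conditions under linear transformations): for a conditionally
`(s₁,C₁;s₂,C₂)`-Frostman random variable `(X,Y)` with `0 ≤ s₁,s₂ ≤ 1` and `C₁, C₂ > 0`,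
and `a, b, c, d ∈ ℝ`: (i) there are `K₁ = K₁(a,b) > 0`, `K₂ = K₂(a,b) > 0` such that
`aX + bY` is `(s₁, K₁C₁)`-Frostman when `a ≠ 0` and `(s₂, K₂C₂)`-Frostman when `b ≠ 0`;
(ii) if `ad − bc ≠ 0` there is `K = K(a,b,c,d) > 0` such that `(aX+bY, cX+dY)` is jointly
`(s₁,s₂,K C₁C₂)`-Frostman when `ad ≠ 0` and jointly `(s₂,s₁,K C₁C₂)`-Frostman when `bc ≠ 0`. -/
theorem frostman_linear_transform :
    (∀ a b : ℝ, ∃ K₁ K₂ : ℝ, 0 < K₁ ∧ 0 < K₂ ∧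
      ∀ (Ω : Type) (mΩ : MeasurableSpace Ω) (P : Measure Ω), IsProbabilityMeasure P →
        ∀ (X Y : Ω → ℝ), Measurable X → Measurable Y →
          ∀ (s₁ s₂ C₁ C₂ : ℝ), 0 ≤ s₁ → s₁ ≤ 1 → 0 ≤ s₂ → s₂ ≤ 1 → 0 < C₁ → 0 < C₂ →
            FrostmanGiven P X Y s₁ C₁ → FrostmanGiven P Y X s₂ C₂ →
              (a ≠ 0 → Frostman P (fun ω => a * X ω + b * Y ω) s₁ (K₁ * C₁)) ∧
              (b ≠ 0 → Frostman P (fun ω => a * X ω + b * Y ω) s₂ (K₂ * C₂))) ∧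
    (∀ a b c d : ℝ, a * d - b * c ≠ 0 → ∃ K : ℝ, 0 < K ∧
      ∀ (Ω : Type) (mΩ : MeasurableSpace Ω) (P : Measure Ω), IsProbabilityMeasure P →
        ∀ (X Y : Ω → ℝ), Measurable X → Measurable Y →
          ∀ (s₁ s₂ C₁ C₂ : ℝ), 0 ≤ s₁ → s₁ ≤ 1 → 0 ≤ s₂ → s₂ ≤ 1 → 0 < C₁ → 0 < C₂ →
            FrostmanGiven P X Y s₁ C₁ → FrostmanGiven P Y X s₂ C₂ →
              (a * d ≠ 0 →
                JointlyFrostman P (fun ω => a * X ω + b * Y ω)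
                  (fun ω => c * X ω + d * Y ω) s₁ s₂ (K * (C₁ * C₂))) ∧
              (b * c ≠ 0 →
                JointlyFrostman P (fun ω => a * X ω + b * Y ω)
                  (fun ω => c * X ω + d * Y ω) s₂ s₁ (K * (C₁ * C₂)))) := by
  refine ⟨fun a b ↦ ⟨max 1 |a|⁻¹, max 1 |b|⁻¹, by positivity, by positivity, ?_⟩,
    fun a b c d hD ↦ ⟨max (max (distortion a b c d) (distortion d c b a))
      (max (distortion b a d c) (distortion c d a b)), by simp [distortion_pos], ?_⟩⟩
  all_goals
    intro Ω _ P _ X Y hX hY s₁ s₂ C₁ C₂ hs₁ hs₁' hs₂ hs₂' hC₁ hC₂ hXY hYX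
  · refine ⟨fun ha ↦ hXY.frostman_linear_comb hY ⟨hs₁, hs₁'⟩ ha b, fun hb ↦ ?_⟩
    simpa only [add_comm] using hYX.frostman_linear_comb hX ⟨hs₂, hs₂'⟩ hb a
  · refine ⟨fun had ↦ ?_, fun hbc ↦ ?_⟩
    · refine (hXY.jointlyFrostman_linear_comb hYX hX hY ⟨hs₁, hs₁'⟩ ⟨hs₂, hs₂'⟩
        (left_ne_zero_of_mul had) (right_ne_zero_of_mul had) hD).mono_const ?_
      exact mul_le_mul_of_nonneg_right (le_max_left _ _) (by positivity)
    · have hD' : b * c - a * d ≠ 0 := sub_ne_zero.mpr (sub_ne_zero.mp hD).symm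
      have hjoint := hYX.jointlyFrostman_linear_comb hXY hY hX ⟨hs₂, hs₂'⟩ ⟨hs₁, hs₁'⟩
        (left_ne_zero_of_mul hbc) (right_ne_zero_of_mul hbc) hD'
      simp only [add_comm (b * _), add_comm (d * _), mul_comm C₂] at hjoint
      exact hjoint.mono_const
        (mul_le_mul_of_nonneg_right (le_max_right _ _) (by positivity))
end

section
/- Let μ be a (2s, C)-Frostman probability measure with spt(μ) ⊂ B(0, R) ⊂ ℝ², where 1/4 < s ≤ 1 and C, R > 0. Then for each t there is a constant K_t > 0 depending only on t such that for all r, η, t with 0 < η < r < 2R, 0 < t ≤ 1 and t < 2s − 1/2, one has Δ(μ)([r, r + η]) ≤ K_t·( C·max{R^{2s−t}, 1}/(2s − t − 1/2) + 1 )·η^t. -/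
open MeasureTheory Real

/-- A Borel probability measure on a metric space is `(s,C)`-Frostman if
`μ(B(x,r)) ≤ C r^s` for every ball. -/
def FrostmanMeasure {E : Type*} [PseudoMetricSpace E] [MeasurableSpace E]
    (μ : Measure E) (s C : ℝ) : Prop :=
  ∀ (x : E) (r : ℝ), 0 < r → (μ (Metric.ball x r)).toReal ≤ C * r ^ s

/-- The support of a measure: points all of whose neighbourhoods have positive mass. -/
def sptOf {E : Type*} [PseudoMetricSpace E] [MeasurableSpace E] (μ : Measure E) : Set E :=
  {x | ∀ r : ℝ, 0 < r → μ (Metric.ball x r) ≠ 0}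

/-- The distance measure `Δ(μ)` on `ℝ`: the pushforward of `μ × μ` under
`(x,y) ↦ |x − y|`. -/
noncomputable def deltaMeasure (μ : Measure (EuclideanSpace ℝ (Fin 2))) : Measure ℝ :=
  Measure.map (fun p : EuclideanSpace ℝ (Fin 2) × EuclideanSpace ℝ (Fin 2) =>
    dist p.1 p.2) (μ.prod μ)

/-!
`Δ(μ)([r, r + η])` is the mass that `μ ∗ μ̃` gives to an annulus, and the indicator of that annulus
is dominated by `r / η` times the average over the circle of radius `r` of a Gaussian of width `η`.
On the Fourier side the resulting bound is an integral of `exp (-η² |ξ|²) |μ̂(ξ)|² |σ̂_r(ξ)|`. The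
circle decays like `(r |ξ|) ^ (-1/2)`, by van der Corput's first-derivative test, and the Gaussian
is at most `(η |ξ|) ^ (t - 1)`, which leaves the Fourier form of the Riesz energy of exponent
`t + 1/2`. Writing powers of the norm as superpositions of Gaussians compares it with the energy
itself, which is finite by the Frostman condition because `t + 1/2 < 2s`.
-/

open Set
open scoped ENNReal

section RieszEnergy

variable {E : Type*} [PseudoMetricSpace E] [MeasurableSpace E]

/-- The Riesz energy `∬ |x - y|^(-a) dμ(x) dμ(y)`. It is formed with extended distances, so that
coinciding points contribute `∞` and not the junk value of `0 ^ (-a)` in `ℝ`. -/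
noncomputable def rieszEnergy (μ : Measure E) (a : ℝ) : ℝ≥0∞ :=
  ∫⁻ x, ∫⁻ y, edist x y ^ (-a) ∂μ ∂μ

lemma ofReal_rpow_neg_le_add_setLIntegral {a d ρ : ℝ} (ha : 0 < a) (hd : 0 < d) (hρ : 0 < ρ) :
    ENNReal.ofReal (d ^ (-a)) ≤ ENNReal.ofReal (ρ ^ (-a)) +
      ∫⁻ u in Ioc 0 ρ, (Ioi d).indicator (fun u ↦ ENNReal.ofReal (a * u ^ (-a - 1))) u := by
  rcases le_total ρ d with h | h
  · exact le_add_right <| ENNReal.ofReal_le_ofReal <|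
      rpow_le_rpow_of_nonpos hρ h (neg_nonpos.2 ha.le)
  have hzero : (0 : ℝ) ∉ uIcc d ρ := notMem_uIcc_of_lt hd hρ
  have hint : ∫ u in d..ρ, a * u ^ (-a - 1) = d ^ (-a) - ρ ^ (-a) := by
    rw [intervalIntegral.integral_const_mul, integral_rpow (.inr ⟨by linarith, hzero⟩),
      sub_add_cancel]
    field_simp
    ring
  have hset : Ioi d ∩ Ioc 0 ρ = Ioc d ρ := by
    ext u
    exact ⟨fun h ↦ ⟨h.1, h.2.2⟩, fun h ↦ ⟨h.1, hd.trans h.1, h.2⟩⟩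
  rw [setLIntegral_indicator measurableSet_Ioi, hset,
    ← ofReal_integral_eq_lintegral_ofReal, ← intervalIntegral.integral_of_le h, hint,
    ← ENNReal.ofReal_add (by positivity)]
  · ring_nf
    rfl
  · exact sub_nonneg.2 (rpow_le_rpow_of_nonpos hd h (neg_nonpos.2 ha.le))
  · exact (intervalIntegrable_iff_integrableOn_Ioc_of_le h).1
      ((intervalIntegral.intervalIntegrable_rpow (.inr hzero)).const_mul a)
  · filter_upwards [ae_restrict_mem measurableSet_Ioc] with u hu
    have := hd.trans hu.1
    positivity

lemma setLIntegral_Ioc_ofReal_rpow_sub_one {p ρ : ℝ} (hp : 0 < p) (hρ : 0 ≤ ρ) :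
    ∫⁻ u in Ioc 0 ρ, ENNReal.ofReal (u ^ (p - 1)) = ENNReal.ofReal (ρ ^ p / p) := by
  have hint : IntervalIntegrable (fun u : ℝ ↦ u ^ (p - 1)) volume 0 ρ :=
    intervalIntegral.intervalIntegrable_rpow' (by linarith)
  rw [← ofReal_integral_eq_lintegral_ofReal
      ((intervalIntegrable_iff_integrableOn_Ioc_of_le hρ).1 hint),
    ← intervalIntegral.integral_of_le hρ, integral_rpow (.inl (by linarith)), sub_add_cancel,
    zero_rpow hp.ne', sub_zero]
  filter_upwards [ae_restrict_mem measurableSet_Ioc] with u hu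
  exact rpow_nonneg hu.1.le _

lemma sptOf_eq_support (μ : Measure E) : sptOf μ = μ.support := by
  ext x
  simp only [sptOf, mem_ofPred_eq, Metric.nhds_basis_ball.mem_measureSupport, pos_iff_ne_zero]

lemma lintegral_setLIntegral_indicator_Ioi_dist [OpensMeasurableSpace E] {μ : Measure E} [SFinite μ]
    {w : ℝ → ℝ≥0∞} (hw : Measurable w) (x : E) (s : Set ℝ) :
    ∫⁻ y, (∫⁻ u in s, (Ioi (dist x y)).indicator w u) ∂μ =
      ∫⁻ u in s, w u * μ (Metric.ball x u) := by
  have hset : MeasurableSet {p : E × ℝ | dist x p.1 < p.2} :=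
    measurableSet_lt (by fun_prop) measurable_snd
  have hmeas : Measurable fun p : E × ℝ ↦ (Ioi (dist x p.1)).indicator w p.2 :=
    (hw.comp measurable_snd).indicator hset
  rw [lintegral_lintegral_swap hmeas.aemeasurable]
  refine lintegral_congr fun u ↦ ?_
  rw [← lintegral_indicator_const Metric.isOpen_ball.measurableSet]
  refine lintegral_congr fun y ↦ ?_
  simp only [indicator, mem_Ioi, Metric.mem_ball']

namespace FrostmanMeasure

variable {μ : Measure E} {σ C : ℝ}

lemma measure_ball_le [IsFiniteMeasure μ] (h : FrostmanMeasure μ σ C) (x : E) {r : ℝ}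
    (hr : 0 < r) : μ (Metric.ball x r) ≤ ENNReal.ofReal (C * r ^ σ) :=
  (ENNReal.le_ofReal_iff_toReal_le (measure_ne_top _ _)
    (ENNReal.toReal_nonneg.trans (h x r hr))).2 (h x r hr)

lemma ae_dist_pos [IsFiniteMeasure μ] (h : FrostmanMeasure μ σ C) (hσ : 0 < σ) (x : E) :
    ∀ᵐ y ∂μ, 0 < dist x y := by
  have hlim : Filter.Tendsto (fun r : ℝ ↦ ENNReal.ofReal (C * r ^ σ)) (nhdsWithin 0 (Ioi 0))
      (nhds 0) := by
    have hcont : Continuous fun r : ℝ ↦ ENNReal.ofReal (C * r ^ σ) :=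
      ENNReal.continuous_ofReal.comp ((continuous_rpow_const hσ.le).const_mul C)
    simpa [zero_rpow hσ.ne'] using (hcont.tendsto 0).mono_left nhdsWithin_le_nhds
  refine le_antisymm (ge_of_tendsto hlim ?_) zero_le
  filter_upwards [self_mem_nhdsWithin] with r hr
  refine (measure_mono fun y hy ↦ ?_).trans (h.measure_ball_le x hr)
  have hxy : dist x y ≤ 0 := not_lt.1 hy
  exact Metric.mem_ball'.2 (hxy.trans_lt hr)

variable [OpensMeasurableSpace E]

lemma lintegral_edist_rpow_neg_le [IsProbabilityMeasure μ] (h : FrostmanMeasure μ σ C)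
    {a ρ : ℝ} (ha : 0 < a) (haσ : a < σ) (hρ : 0 < ρ) (x : E) :
    ∫⁻ y, edist x y ^ (-a) ∂μ ≤
      ENNReal.ofReal (ρ ^ (-a)) + ENNReal.ofReal (C * (a * (ρ ^ (σ - a) / (σ - a)))) := by
  let w : ℝ → ℝ≥0∞ := fun u ↦ ENNReal.ofReal (a * u ^ (-a - 1))
  have hw : Measurable w := by fun_prop
  have hball : ∀ u ∈ Ioc 0 ρ, w u * μ (Metric.ball x u) ≤
      ENNReal.ofReal (C * a) * ENNReal.ofReal (u ^ (σ - a - 1)) := by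
    intro u hu
    have hu0 : 0 < u := hu.1
    calc w u * μ (Metric.ball x u) ≤ w u * ENNReal.ofReal (C * u ^ σ) := by
          gcongr
          exact h.measure_ball_le x hu0
      _ = ENNReal.ofReal (C * a) * ENNReal.ofReal (u ^ (σ - a - 1)) := by
          rw [← ENNReal.ofReal_mul (by positivity), ← ENNReal.ofReal_mul' (by positivity),
            show σ - a - 1 = -a - 1 + σ by ring, rpow_add hu0]
          ring_nf
  calc ∫⁻ y, edist x y ^ (-a) ∂μ
      ≤ ∫⁻ y, (ENNReal.ofReal (ρ ^ (-a)) +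
          ∫⁻ u in Ioc 0 ρ, (Ioi (dist x y)).indicator w u) ∂μ := by
        refine lintegral_mono_ae ?_
        filter_upwards [h.ae_dist_pos (ha.trans haσ) x] with y hy
        rw [edist_dist, ENNReal.ofReal_rpow_of_pos hy]
        exact ofReal_rpow_neg_le_add_setLIntegral ha hy hρ
    _ = ENNReal.ofReal (ρ ^ (-a)) + ∫⁻ u in Ioc 0 ρ, w u * μ (Metric.ball x u) := by
        rw [lintegral_add_left measurable_const, lintegral_const, measure_univ, mul_one,
          lintegral_setLIntegral_indicator_Ioi_dist hw]
    _ ≤ ENNReal.ofReal (ρ ^ (-a)) +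
        ∫⁻ u in Ioc 0 ρ, ENNReal.ofReal (C * a) * ENNReal.ofReal (u ^ (σ - a - 1)) := by
        gcongr 1
        exact setLIntegral_mono (by fun_prop) hball
    _ = _ := by
        have := sub_pos.2 haσ
        rw [lintegral_const_mul _ (by fun_prop),
          setLIntegral_Ioc_ofReal_rpow_sub_one (sub_pos.2 haσ) hρ.le,
          ← ENNReal.ofReal_mul' (by positivity), mul_assoc]

lemma rieszEnergy_le [IsProbabilityMeasure μ] (h : FrostmanMeasure μ σ C) {a ρ : ℝ}
    (ha : 0 < a) (haσ : a < σ) (hρ : 0 < ρ) :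
    rieszEnergy μ a ≤
      ENNReal.ofReal (ρ ^ (-a)) + ENNReal.ofReal (C * (a * (ρ ^ (σ - a) / (σ - a)))) := by
  calc rieszEnergy μ a
      ≤ ∫⁻ _, (ENNReal.ofReal (ρ ^ (-a)) +
          ENNReal.ofReal (C * (a * (ρ ^ (σ - a) / (σ - a))))) ∂μ :=
        lintegral_mono fun x ↦ h.lintegral_edist_rpow_neg_le ha haσ hρ x
    _ = _ := by rw [lintegral_const, measure_univ, mul_one]

lemma one_le_of_sptOf_subset_ball [HereditarilyLindelofSpace E] [IsProbabilityMeasure μ]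
    (h : FrostmanMeasure μ σ C) {x : E} {R : ℝ} (hR : 0 < R)
    (hsupp : sptOf μ ⊆ Metric.ball x R) : 1 ≤ C * R ^ σ := by
  have hcompl : μ (Metric.ball x R)ᶜ = 0 :=
    measure_mono_null (compl_subset_compl.2 hsupp)
      (sptOf_eq_support μ ▸ Measure.measure_compl_support)
  have hball : μ (Metric.ball x R) = 1 :=
    (prob_compl_eq_zero_iff Metric.isOpen_ball.measurableSet).1 hcompl
  simpa [hball] using h x R hR

lemma pos_of_sptOf_subset_ball [HereditarilyLindelofSpace E] [IsProbabilityMeasure μ]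
    (h : FrostmanMeasure μ σ C) {x : E} {R : ℝ} (hR : 0 < R)
    (hsupp : sptOf μ ⊆ Metric.ball x R) : 0 < C :=
  pos_of_mul_pos_left (zero_lt_one.trans_le (h.one_le_of_sptOf_subset_ball hR hsupp))
    (rpow_nonneg hR.le σ)

lemma rieszEnergy_le_of_sptOf_subset_ball [HereditarilyLindelofSpace E] [IsProbabilityMeasure μ]
    (h : FrostmanMeasure μ σ C) {a : ℝ} (ha : 0 < a) (haσ : a < σ) {x : E} {R : ℝ} (hR : 0 < R)
    (hsupp : sptOf μ ⊆ Metric.ball x R) :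
    rieszEnergy μ a ≤ ENNReal.ofReal (σ * (C * R ^ (σ - a) / (σ - a))) := by
  have hβ : 0 < σ - a := sub_pos.2 haσ
  have hC : 1 ≤ C * R ^ σ := h.one_le_of_sptOf_subset_ball hR hsupp
  have hC0 : 0 < C := h.pos_of_sptOf_subset_ball hR hsupp
  have hpow : R ^ (-a) ≤ C * R ^ (σ - a) := by
    rw [sub_eq_add_neg, rpow_add hR, ← mul_assoc]
    exact le_mul_of_one_le_left (by positivity) hC
  refine (h.rieszEnergy_le ha haσ hR).trans ?_
  rw [← ENNReal.ofReal_add (by positivity) (by positivity)]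
  refine ENNReal.ofReal_le_ofReal ?_
  calc R ^ (-a) + C * (a * (R ^ (σ - a) / (σ - a)))
      ≤ C * R ^ (σ - a) + C * (a * (R ^ (σ - a) / (σ - a))) := by gcongr
    _ = σ * (C * R ^ (σ - a) / (σ - a)) := by
        field_simp
        ring

end FrostmanMeasure

end RieszEnergy

section GammaIntegrals

variable {p c : ℝ}

lemma integrableOn_rpow_mul_exp_neg_mul_Ioi (hp : 0 < p) (hc : 0 < c) :
    IntegrableOn (fun x ↦ x ^ (p - 1) * exp (-(c * x))) (Ioi 0) := by
  refine Integrable.of_integral_ne_zero ?_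
  rw [integral_rpow_mul_exp_neg_mul_Ioi hp hc]
  have := Gamma_pos_of_pos hp
  positivity

lemma lintegral_rpow_mul_exp_neg_mul_Ioi (hp : 0 < p) (hc : 0 < c) :
    ∫⁻ x in Ioi 0, ENNReal.ofReal (x ^ (p - 1) * exp (-(c * x))) =
      ENNReal.ofReal (c ^ (-p) * Gamma p) := by
  rw [← ofReal_integral_eq_lintegral_ofReal (integrableOn_rpow_mul_exp_neg_mul_Ioi hp hc),
    integral_rpow_mul_exp_neg_mul_Ioi hp hc, one_div, inv_rpow hc.le, rpow_neg hc.le]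
  filter_upwards [ae_restrict_mem measurableSet_Ioi] with x hx
  exact mul_nonneg (rpow_nonneg (le_of_lt hx) _) (exp_pos _).le

lemma lintegral_rpow_mul_exp_neg_div_Ioi (hp : 0 < p) (hc : 0 < c) :
    ∫⁻ x in Ioi 0, ENNReal.ofReal (x ^ (-p - 1) * exp (-(c / x))) =
      ENNReal.ofReal (c ^ (-p) * Gamma p) := by
  let g : ℝ → ℝ := fun y ↦ y ^ (p - 1) * exp (-(c * y))
  have hsubst : EqOn (fun x ↦ (|(-1 : ℝ)| * x ^ ((-1 : ℝ) - 1)) • g (x ^ (-1 : ℝ)))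
      (fun x ↦ x ^ (-p - 1) * exp (-(c / x))) (Ioi 0) := by
    intro x hx
    have hx : 0 < x := hx
    have hpow : x ^ ((-1 : ℝ) - 1) * x⁻¹ ^ (p - 1) = x ^ (-p - 1) := by
      rw [inv_rpow hx.le, ← rpow_neg hx.le, ← rpow_add hx]
      ring_nf
    simp only [g, rpow_neg_one, abs_neg, abs_one, one_mul, smul_eq_mul, ← mul_assoc, hpow,
      div_eq_mul_inv]
  have hint := (integrableOn_Ioi_comp_rpow_iff g (p := -1) (by norm_num)).2
    (integrableOn_rpow_mul_exp_neg_mul_Ioi hp hc)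
  rw [integrableOn_congr_fun hsubst measurableSet_Ioi] at hint
  rw [← ofReal_integral_eq_lintegral_ofReal hint,
    ← setIntegral_congr_fun measurableSet_Ioi hsubst,
    integral_comp_rpow_Ioi g (by norm_num), integral_rpow_mul_exp_neg_mul_Ioi hp hc, one_div,
    inv_rpow hc.le, rpow_neg hc.le]
  filter_upwards [ae_restrict_mem measurableSet_Ioi] with x hx
  exact mul_nonneg (rpow_nonneg (le_of_lt hx) _) (exp_pos _).le

end GammaIntegrals

section GaussianSubordination

variable {E : Type*} [NormedAddCommGroup E]

lemma ofReal_Gamma_mul_enorm_rpow_neg {ξ : E} (hξ : ξ ≠ 0) {q : ℝ} (hq : 0 < q) :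
    ENNReal.ofReal (Gamma q) * ‖ξ‖ₑ ^ (-(2 * q)) =
      ∫⁻ τ in Ioi 0, ENNReal.ofReal (τ ^ (q - 1)) * ENNReal.ofReal (exp (-(τ * ‖ξ‖ ^ 2))) := by
  have hξ := norm_pos_iff.2 hξ
  have hc : (‖ξ‖ ^ 2) ^ (-q) = ‖ξ‖ ^ (-(2 * q)) := by
    rw [← rpow_natCast, ← rpow_mul hξ.le]
    ring_nf
  rw [← ofReal_norm, ENNReal.ofReal_rpow_of_pos hξ, ← hc, mul_comm,
    ← ENNReal.ofReal_mul (by positivity), ← lintegral_rpow_mul_exp_neg_mul_Ioi hq (by positivity)]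
  refine setLIntegral_congr_fun measurableSet_Ioi fun τ hτ ↦ ?_
  simp only [mul_comm (‖ξ‖ ^ 2), ENNReal.ofReal_mul (rpow_nonneg (le_of_lt hτ) _)]

lemma setLIntegral_rpow_mul_exp_neg_norm_sq_div_le (z : E) {a : ℝ} (ha : 0 < a) :
    ∫⁻ τ in Ioi 0, ENNReal.ofReal (τ ^ (-(a / 2) - 1)) *
        ENNReal.ofReal (exp (-(‖z‖ ^ 2 / (4 * τ)))) ≤
      ENNReal.ofReal (2 ^ a * Gamma (a / 2)) * ‖z‖ₑ ^ (-a) := by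
  rcases eq_or_ne z 0 with rfl | hz
  · rw [enorm_zero, ENNReal.zero_rpow_of_neg (neg_neg_iff_pos.2 ha), ENNReal.mul_top]
    · exact le_top
    · exact (ENNReal.ofReal_pos.2 (by have := Gamma_pos_of_pos (half_pos ha); positivity)).ne'
  have hz := norm_pos_iff.2 hz
  have hc : (‖z‖ ^ 2 / 4) ^ (-(a / 2)) = 2 ^ a * ‖z‖ ^ (-a) := by
    rw [show ‖z‖ ^ 2 / 4 = (‖z‖ / 2) ^ (2 : ℝ) by rw [rpow_two]; ring, ← rpow_mul (by positivity),
      div_rpow hz.le two_pos.le, show (2 : ℝ) * -(a / 2) = -a by ring, rpow_neg two_pos.le,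
      div_inv_eq_mul, mul_comm]
  rw [← ofReal_norm, ENNReal.ofReal_rpow_of_pos hz, ← ENNReal.ofReal_mul (by positivity),
    mul_right_comm, ← hc, ← lintegral_rpow_mul_exp_neg_div_Ioi (half_pos ha) (by positivity)]
  refine (setLIntegral_congr_fun measurableSet_Ioi fun τ hτ ↦ ?_).le
  simp only [← div_div, ENNReal.ofReal_mul (rpow_nonneg (le_of_lt hτ) _)]

variable [MeasurableSpace E] [OpensMeasurableSpace E]

lemma integrable_exp_neg_norm_sq_div (ρ : Measure E) [IsFiniteMeasure ρ] {b : ℝ} (hb : 0 < b) :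
    Integrable (fun z ↦ exp (-(‖z‖ ^ 2 / (4 * b)))) ρ := by
  refine (integrable_const (1 : ℝ)).mono' (Continuous.aestronglyMeasurable (by fun_prop))
    (.of_forall fun z ↦ ?_)
  rw [norm_of_nonneg (exp_pos _).le, exp_le_one_iff, neg_nonpos]
  positivity

lemma ofReal_Gamma_mul_lintegral_enorm_rpow_neg_mul (ν : Measure E) [SFinite ν]
    [NullSingletonClass ν] {f : E → ℝ≥0∞} (hf : Measurable f) {q : ℝ} (hq : 0 < q) :
    ENNReal.ofReal (Gamma q) * ∫⁻ ξ, ‖ξ‖ₑ ^ (-(2 * q)) * f ξ ∂ν =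
      ∫⁻ τ in Ioi 0, ENNReal.ofReal (τ ^ (q - 1)) *
        ∫⁻ ξ, ENNReal.ofReal (exp (-(τ * ‖ξ‖ ^ 2))) * f ξ ∂ν := by
  calc ENNReal.ofReal (Gamma q) * ∫⁻ ξ, ‖ξ‖ₑ ^ (-(2 * q)) * f ξ ∂ν
      = ∫⁻ ξ, (∫⁻ τ in Ioi 0, ENNReal.ofReal (τ ^ (q - 1)) *
          (ENNReal.ofReal (exp (-(τ * ‖ξ‖ ^ 2))) * f ξ)) ∂ν := by
        rw [← lintegral_const_mul _ (by fun_prop)]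
        refine lintegral_congr_ae ((Measure.ae_ne ν 0).mono fun ξ hξ ↦ ?_)
        simp only [← mul_assoc]
        rw [lintegral_mul_const _ (by fun_prop), ← ofReal_Gamma_mul_enorm_rpow_neg hξ hq]
    _ = _ := by
        rw [lintegral_lintegral_swap (by fun_prop)]
        exact lintegral_congr fun τ ↦ lintegral_const_mul _ (by fun_prop)

lemma setLIntegral_rpow_mul_lintegral_exp_neg_norm_sq_div_le (ν : Measure E) [SFinite ν] {a : ℝ}
    (ha : 0 < a) :
    ∫⁻ τ in Ioi 0, ENNReal.ofReal (τ ^ (-(a / 2) - 1)) *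
        ∫⁻ z, ENNReal.ofReal (exp (-(‖z‖ ^ 2 / (4 * τ)))) ∂ν ≤
      ENNReal.ofReal (2 ^ a * Gamma (a / 2)) * ∫⁻ z, ‖z‖ₑ ^ (-a) ∂ν := by
  calc ∫⁻ τ in Ioi 0, ENNReal.ofReal (τ ^ (-(a / 2) - 1)) *
        ∫⁻ z, ENNReal.ofReal (exp (-(‖z‖ ^ 2 / (4 * τ)))) ∂ν
      = ∫⁻ z, (∫⁻ τ in Ioi 0, ENNReal.ofReal (τ ^ (-(a / 2) - 1)) *
          ENNReal.ofReal (exp (-(‖z‖ ^ 2 / (4 * τ))))) ∂ν := by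
        rw [← lintegral_lintegral_swap (by fun_prop)]
        exact lintegral_congr fun τ ↦ (lintegral_const_mul _ (by fun_prop)).symm
    _ ≤ ∫⁻ z, ENNReal.ofReal (2 ^ a * Gamma (a / 2)) * ‖z‖ₑ ^ (-a) ∂ν :=
        lintegral_mono fun z ↦ setLIntegral_rpow_mul_exp_neg_norm_sq_div_le z ha
    _ = _ := lintegral_const_mul _ (by fun_prop)

end GaussianSubordination

section FourierEnergy

variable {V : Type*} [NormedAddCommGroup V] [InnerProductSpace ℝ V] [FiniteDimensional ℝ V]
  [MeasurableSpace V] [BorelSpace V]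

lemma integrable_exp_neg_mul_norm_sq {b : ℝ} (hb : 0 < b) :
    Integrable fun ξ : V ↦ exp (-(b * ‖ξ‖ ^ 2)) := by
  refine Integrable.of_integral_ne_zero ?_
  simp only [← neg_mul, GaussianFourier.integral_rexp_neg_mul_sq_norm hb]
  positivity

lemma integral_exp_neg_mul_norm_sq_mul_exp_inner {b : ℝ} (hb : 0 < b) (z : V) :
    ∫ ξ, (exp (-(b * ‖ξ‖ ^ 2)) : ℂ) * Complex.exp (inner ℝ z ξ * Complex.I) =
      ((π / b) ^ (Module.finrank ℝ V / 2 : ℝ) * exp (-(‖z‖ ^ 2 / (4 * b))) : ℝ) := by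
  have h := GaussianFourier.integral_cexp_neg_mul_sq_norm_add (b := (b : ℂ)) (by simpa using hb)
    Complex.I z
  convert! h using 1
  · refine integral_congr_ae (.of_forall fun ξ ↦ ?_)
    simp only [Complex.ofReal_exp, ← Complex.exp_add]
    push_cast
    ring_nf
  · push_cast [Complex.ofReal_cpow (show 0 ≤ π / b by positivity), Complex.I_sq]
    ring_nf

lemma integral_exp_neg_norm_sq_div (ρ : Measure V) [IsFiniteMeasure ρ] {b : ℝ} (hb : 0 < b) :
    (((π / b) ^ (Module.finrank ℝ V / 2 : ℝ) * ∫ z, exp (-(‖z‖ ^ 2 / (4 * b))) ∂ρ : ℝ) : ℂ) =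
      ∫ ξ, (exp (-(b * ‖ξ‖ ^ 2)) : ℂ) * charFun ρ ξ := by
  have hint : Integrable (Function.uncurry fun z ξ : V ↦
      (exp (-(b * ‖ξ‖ ^ 2)) : ℂ) * Complex.exp (inner ℝ z ξ * Complex.I)) (ρ.prod volume) := by
    refine ((integrable_const (1 : ℝ)).mul_prod (integrable_exp_neg_mul_norm_sq hb)).mono'
      (Continuous.aestronglyMeasurable (by fun_prop)) (.of_forall fun p ↦ ?_)
    simp only [Function.uncurry, norm_mul, Complex.norm_exp_ofReal_mul_I, Complex.norm_real,
      norm_of_nonneg (exp_pos _).le, mul_one, one_mul, le_refl]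
  have hswap := integral_integral_swap hint
  simp only [integral_exp_neg_mul_norm_sq_mul_exp_inner hb, integral_const_mul,
    ← charFun_apply] at hswap
  rw [← hswap, integral_complex_ofReal, integral_const_mul]

lemma lintegral_exp_neg_norm_sq_div_le (ρ : Measure V) [IsFiniteMeasure ρ] {b : ℝ} (hb : 0 < b) :
    ENNReal.ofReal ((π / b) ^ (Module.finrank ℝ V / 2 : ℝ)) *
        ∫⁻ z, ENNReal.ofReal (exp (-(‖z‖ ^ 2 / (4 * b)))) ∂ρ ≤
      ∫⁻ ξ, ENNReal.ofReal (exp (-(b * ‖ξ‖ ^ 2))) * ‖charFun ρ ξ‖ₑ := by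
  rw [← ofReal_integral_eq_lintegral_ofReal (integrable_exp_neg_norm_sq_div ρ hb)
      (.of_forall fun z ↦ (exp_pos _).le),
    ← ENNReal.ofReal_mul (by positivity),
    ← Complex.norm_of_nonneg (mul_nonneg (by positivity) (integral_nonneg fun z ↦ (exp_pos _).le)),
    ofReal_norm, integral_exp_neg_norm_sq_div ρ hb]
  refine (enorm_integral_le_lintegral_enorm _).trans_eq (lintegral_congr fun ξ ↦ ?_)
  rw [enorm_mul, ← ofReal_norm, Complex.norm_of_nonneg (exp_pos _).le]

/-- The distribution of the difference of two independent `μ`-distributed vectors, i.e. the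
autocorrelation `μ ∗ μ̃` with `μ̃` the reflection of `μ`. -/
noncomputable def diffMeasure (μ : Measure V) : Measure V :=
  (μ.prod μ).map fun p ↦ p.1 - p.2

variable (μ : Measure V)

instance [IsProbabilityMeasure μ] : IsProbabilityMeasure (diffMeasure μ) :=
  Measure.isProbabilityMeasure_map (by fun_prop)

instance [IsFiniteMeasure μ] : IsFiniteMeasure (diffMeasure μ) := by
  unfold diffMeasure
  infer_instance

lemma charFun_diffMeasure [IsFiniteMeasure μ] (ξ : V) :
    charFun (diffMeasure μ) ξ = ((‖charFun μ ξ‖ ^ 2 : ℝ) : ℂ) := by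
  have hsplit (p : V × V) : Complex.exp (inner ℝ (p.1 - p.2) ξ * Complex.I) =
      Complex.exp (inner ℝ p.1 ξ * Complex.I) * Complex.exp (inner ℝ p.2 (-ξ) * Complex.I) := by
    rw [← Complex.exp_add, inner_sub_left, inner_neg_right]
    push_cast
    ring_nf
  rw [charFun_apply, diffMeasure,
    integral_map (by fun_prop) (Continuous.aestronglyMeasurable (by fun_prop))]
  simp only [hsplit]
  rw [integral_prod_mul (fun x ↦ Complex.exp (inner ℝ x ξ * Complex.I))
      (fun y ↦ Complex.exp (inner ℝ y (-ξ) * Complex.I)), ← charFun_apply, ← charFun_apply,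
    charFun_neg, Complex.mul_conj, Complex.normSq_eq_norm_sq]

lemma lintegral_exp_neg_mul_norm_sq_mul_enorm_charFun_sq [IsFiniteMeasure μ] {b : ℝ}
    (hb : 0 < b) :
    ∫⁻ ξ, ENNReal.ofReal (exp (-(b * ‖ξ‖ ^ 2))) * ‖charFun μ ξ‖ₑ ^ 2 =
      ENNReal.ofReal ((π / b) ^ (Module.finrank ℝ V / 2 : ℝ)) *
        ∫⁻ z, ENNReal.ofReal (exp (-(‖z‖ ^ 2 / (4 * b)))) ∂diffMeasure μ := by
  have h := integral_exp_neg_norm_sq_div (diffMeasure μ) hb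
  simp only [charFun_diffMeasure, ← Complex.ofReal_mul] at h
  rw [integral_complex_ofReal, Complex.ofReal_inj] at h
  have hint : Integrable fun ξ ↦ exp (-(b * ‖ξ‖ ^ 2)) * ‖charFun μ ξ‖ ^ 2 :=
    (integrable_exp_neg_mul_norm_sq hb).mul_bdd (c := μ.real univ ^ 2)
      (Measurable.aestronglyMeasurable (by fun_prop)) (.of_forall fun ξ ↦ by
        rw [norm_pow, norm_norm]
        gcongr
        exact norm_charFun_le ξ)
  rw [← ofReal_integral_eq_lintegral_ofReal (integrable_exp_neg_norm_sq_div _ hb)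
      (.of_forall fun z ↦ (exp_pos _).le), ← ENNReal.ofReal_mul (by positivity), h,
    ofReal_integral_eq_lintegral_ofReal hint (.of_forall fun ξ ↦ by positivity)]
  refine lintegral_congr fun ξ ↦ ?_
  rw [ENNReal.ofReal_mul (exp_pos _).le, ENNReal.ofReal_pow (norm_nonneg _), ofReal_norm]

lemma lintegral_enorm_rpow_neg_diffMeasure [SFinite μ] (a : ℝ) :
    ∫⁻ z, ‖z‖ₑ ^ (-a) ∂diffMeasure μ = rieszEnergy μ a := by
  rw [diffMeasure, lintegral_map (by fun_prop) (by fun_prop), lintegral_prod _ (by fun_prop),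
    rieszEnergy]
  simp only [edist_eq_enorm_sub]

lemma ofReal_Gamma_mul_lintegral_enorm_rpow_mul_enorm_charFun_sq_le [IsFiniteMeasure μ] {a : ℝ}
    (ha : 0 < a) (had : a < Module.finrank ℝ V) :
    ENNReal.ofReal (Gamma ((Module.finrank ℝ V - a) / 2)) *
        ∫⁻ ξ, ‖ξ‖ₑ ^ (a - Module.finrank ℝ V) * ‖charFun μ ξ‖ₑ ^ 2 ≤
      ENNReal.ofReal (π ^ (Module.finrank ℝ V / 2 : ℝ) * (2 ^ a * Gamma (a / 2))) *
        rieszEnergy μ a := by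
  let d : ℝ := Module.finrank ℝ V
  let q : ℝ := (d - a) / 2
  have hnt : Nontrivial V :=
    Module.nontrivial_of_finrank_pos (R := ℝ) (by exact_mod_cast ha.trans had)
  calc ENNReal.ofReal (Gamma q) * ∫⁻ ξ, ‖ξ‖ₑ ^ (a - d) * ‖charFun μ ξ‖ₑ ^ 2
      = ∫⁻ τ in Ioi 0, ENNReal.ofReal (τ ^ (q - 1)) *
          ∫⁻ ξ : V, ENNReal.ofReal (exp (-(τ * ‖ξ‖ ^ 2))) * ‖charFun μ ξ‖ₑ ^ 2 := by
        rw [← ofReal_Gamma_mul_lintegral_enorm_rpow_neg_mul _ (by fun_prop)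
          (half_pos (sub_pos.2 had)), show a - d = -(2 * q) by ring]
    _ = ENNReal.ofReal (π ^ (d / 2)) * ∫⁻ τ in Ioi 0, ENNReal.ofReal (τ ^ (-(a / 2) - 1)) *
          ∫⁻ z, ENNReal.ofReal (exp (-(‖z‖ ^ 2 / (4 * τ)))) ∂diffMeasure μ := by
        rw [← lintegral_const_mul' _ _ ENNReal.ofReal_ne_top]
        refine setLIntegral_congr_fun measurableSet_Ioi fun τ (hτ : 0 < τ) ↦ ?_
        have hpow : τ ^ (q - 1) * (π / τ) ^ (d / 2) = π ^ (d / 2) * τ ^ (-(a / 2) - 1) := by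
          rw [div_rpow pi_pos.le hτ.le, div_eq_mul_inv, ← rpow_neg hτ.le, mul_left_comm,
            ← rpow_add hτ, show q - 1 + -(d / 2) = -(a / 2) - 1 by ring]
        rw [lintegral_exp_neg_mul_norm_sq_mul_enorm_charFun_sq μ hτ, ← mul_assoc,
          ← ENNReal.ofReal_mul (by positivity), hpow, ENNReal.ofReal_mul (by positivity),
          mul_assoc]
    _ ≤ ENNReal.ofReal (π ^ (d / 2)) *
          (ENNReal.ofReal (2 ^ a * Gamma (a / 2)) * ∫⁻ z, ‖z‖ₑ ^ (-a) ∂diffMeasure μ) := by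
        gcongr
        exact setLIntegral_rpow_mul_lintegral_exp_neg_norm_sq_div_le _ ha
    _ = _ := by
        rw [lintegral_enorm_rpow_neg_diffMeasure, ← mul_assoc,
          ← ENNReal.ofReal_mul (by positivity)]

end FourierEnergy

section OscillatoryIntegral

variable {φ φ' φ'' : ℝ → ℝ} {a b l : ℝ}

lemma norm_integral_cexp_neg_mul_I (φ : ℝ → ℝ) (a b : ℝ) :
    ‖∫ x in a..b, Complex.exp ((-φ x : ℝ) * Complex.I)‖ =
      ‖∫ x in a..b, Complex.exp (φ x * Complex.I)‖ := by
  rw [← Complex.norm_conj, ← intervalIntegral.intervalIntegral_conj]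
  simp only [← Complex.exp_conj, map_mul, Complex.conj_I, Complex.conj_ofReal,
    Complex.ofReal_neg, map_neg, neg_mul_neg]

lemma integral_deriv_div_sq (hφ' : ∀ x ∈ uIcc a b, HasDerivAt φ' (φ'' x) x)
    (hcont : ContinuousOn φ'' (uIcc a b)) (hne : ∀ x ∈ uIcc a b, φ' x ≠ 0) :
    ∫ x in a..b, φ'' x / φ' x ^ 2 = (φ' a)⁻¹ - (φ' b)⁻¹ := by
  have hinv : ∀ x ∈ uIcc a b, HasDerivAt (fun x ↦ -(φ' x)⁻¹) (φ'' x / φ' x ^ 2) x := fun x hx ↦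
    ((hφ' x hx).fun_inv (hne x hx)).fun_neg.congr_deriv (by ring)
  rw [intervalIntegral.integral_eq_sub_of_hasDerivAt hinv
    (hcont.div ((HasDerivAt.continuousOn hφ').pow 2)
      fun x hx ↦ pow_ne_zero _ (hne x hx)).intervalIntegrable]
  ring

lemma integral_cexp_mul_I_eq_by_parts (hφ : ∀ x ∈ uIcc a b, HasDerivAt φ (φ' x) x)
    (hφ' : ∀ x ∈ uIcc a b, HasDerivAt φ' (φ'' x) x) (hcont : ContinuousOn φ'' (uIcc a b))
    (hne : ∀ x ∈ uIcc a b, φ' x ≠ 0) :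
    Complex.I * ∫ x in a..b, Complex.exp (φ x * Complex.I) =
      ((φ' b)⁻¹ : ℝ) * Complex.exp (φ b * Complex.I) -
        ((φ' a)⁻¹ : ℝ) * Complex.exp (φ a * Complex.I) +
        ∫ x in a..b, (φ'' x / φ' x ^ 2 : ℝ) * Complex.exp (φ x * Complex.I) := by
  have hprim : ∀ x ∈ uIcc a b,
      HasDerivAt (fun x ↦ ((φ' x)⁻¹ : ℝ) * Complex.exp (φ x * Complex.I))
        (Complex.I * Complex.exp (φ x * Complex.I) -
          (φ'' x / φ' x ^ 2 : ℝ) * Complex.exp (φ x * Complex.I)) x := by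
    intro x hx
    have hne' : (φ' x : ℂ) ≠ 0 := Complex.ofReal_ne_zero.2 (hne x hx)
    refine (((hφ' x hx).fun_inv (hne x hx)).ofReal_comp.mul
      ((hφ x hx).ofReal_comp.mul_const Complex.I).cexp).congr_deriv ?_
    push_cast
    field_simp
    ring
  have hφ_cont : ContinuousOn φ (uIcc a b) := HasDerivAt.continuousOn hφ
  have hw : ContinuousOn (fun x ↦ φ'' x / φ' x ^ 2) (uIcc a b) :=
    hcont.div ((HasDerivAt.continuousOn hφ').pow 2) fun x hx ↦ pow_ne_zero _ (hne x hx)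
  have h := intervalIntegral.integral_eq_sub_of_hasDerivAt hprim
    (ContinuousOn.intervalIntegrable (by fun_prop))
  rw [intervalIntegral.integral_sub (ContinuousOn.intervalIntegrable (by fun_prop))
    (ContinuousOn.intervalIntegrable (by fun_prop)), intervalIntegral.integral_const_mul] at h
  rw [← h, sub_add_cancel]

lemma norm_integral_cexp_mul_I_le_two_div (hab : a ≤ b)
    (hφ : ∀ x ∈ Icc a b, HasDerivAt φ (φ' x) x) (hφ' : ∀ x ∈ Icc a b, HasDerivAt φ' (φ'' x) x)
    (hcont : ContinuousOn φ'' (Icc a b)) (hpos : ∀ x ∈ Icc a b, 0 < φ' x)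
    (hconv : ∀ x ∈ Icc a b, 0 ≤ φ'' x) :
    ‖∫ x in a..b, Complex.exp (φ x * Complex.I)‖ ≤ 2 / φ' a := by
  have hne : ∀ x ∈ Icc a b, φ' x ≠ 0 := fun x hx ↦ (hpos x hx).ne'
  have hend (x : ℝ) (hx : x ∈ Icc a b) :
      ‖((φ' x)⁻¹ : ℝ) * Complex.exp (φ x * Complex.I)‖ ≤ (φ' x)⁻¹ := by
    rw [norm_mul, Complex.norm_exp_ofReal_mul_I, mul_one,
      Complex.norm_of_nonneg (inv_nonneg.2 (hpos x hx).le)]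
  have hint : ‖∫ x in a..b, (φ'' x / φ' x ^ 2 : ℝ) * Complex.exp (φ x * Complex.I)‖ ≤
      (φ' a)⁻¹ - (φ' b)⁻¹ := by
    rw [← uIcc_of_le hab] at hφ' hcont hne
    rw [← integral_deriv_div_sq hφ' hcont hne]
    refine intervalIntegral.norm_integral_le_of_norm_le hab (.of_forall fun x hx ↦ ?_)
      (hcont.div ((HasDerivAt.continuousOn hφ').pow 2)
        fun x hx ↦ pow_ne_zero _ (hne x hx)).intervalIntegrable
    rw [norm_mul, Complex.norm_exp_ofReal_mul_I, mul_one, Complex.norm_of_nonneg]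
    exact div_nonneg (hconv x (Ioc_subset_Icc_self hx)) (sq_nonneg _)
  calc ‖∫ x in a..b, Complex.exp (φ x * Complex.I)‖
      = ‖Complex.I * ∫ x in a..b, Complex.exp (φ x * Complex.I)‖ := by
        rw [norm_mul, Complex.norm_I, one_mul]
    _ ≤ (φ' b)⁻¹ + (φ' a)⁻¹ + ((φ' a)⁻¹ - (φ' b)⁻¹) := by
        rw [← uIcc_of_le hab] at hφ hφ' hcont hne
        rw [integral_cexp_mul_I_eq_by_parts hφ hφ' hcont hne]
        exact norm_add_le_of_le (norm_sub_le_of_le (hend b (right_mem_Icc.2 hab))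
          (hend a (left_mem_Icc.2 hab))) hint
    _ = 2 / φ' a := by ring

lemma norm_integral_cexp_mul_cos_le_of_one_le (hl : 1 ≤ l) :
    ‖∫ θ in 0..π / 2, Complex.exp ((l * cos θ : ℝ) * Complex.I)‖ ≤
      (1 + π) * l ^ (-(1 / 2) : ℝ) := by
  have hl0 : 0 < l := by linarith
  let d : ℝ := l ^ (-(1 / 2) : ℝ)
  have hd0 : 0 < d := rpow_pos_of_pos hl0 _
  have hd1 : d ≤ 1 := rpow_le_one_of_one_le_of_nonpos hl (by norm_num)
  have hdπ : d ≤ π / 2 := by linarith [two_le_pi]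
  have hld : l * d * d = 1 := by
    rw [mul_assoc, ← rpow_add hl0, show -(1 / 2) + -(1 / 2) = (-1 : ℝ) by norm_num, rpow_neg_one,
      mul_inv_cancel₀ hl0.ne']
  have hnear : ‖∫ θ in 0..d, Complex.exp ((-(l * cos θ) : ℝ) * Complex.I)‖ ≤ d := by
    simpa [abs_of_pos hd0] using intervalIntegral.norm_integral_le_of_norm_le_const (a := 0)
      (b := d) fun θ _ ↦ (Complex.norm_exp_ofReal_mul_I (-(l * cos θ))).le
  have hfar : ‖∫ θ in d..π / 2, Complex.exp ((-(l * cos θ) : ℝ) * Complex.I)‖ ≤ π * d := by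
    have hsin : 2 / π * d ≤ sin d := mul_le_sin hd0.le hdπ
    calc _ ≤ 2 / (l * sin d) := by
          refine norm_integral_cexp_mul_I_le_two_div (φ' := fun θ ↦ l * sin θ)
            (φ'' := fun θ ↦ l * cos θ) hdπ (fun θ _ ↦ ?_) (fun θ _ ↦ (hasDerivAt_sin θ).const_mul l)
            (by fun_prop) (fun θ hθ ↦ ?_) (fun θ hθ ↦ ?_)
          · exact ((hasDerivAt_cos θ).const_mul l).neg.congr_deriv (by ring)
          · have := pi_pos
            exact mul_pos hl0 (sin_pos_of_mem_Ioo ⟨by linarith [hθ.1], by linarith [hθ.2]⟩)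
          · exact mul_nonneg hl0.le (cos_nonneg_of_mem_Icc ⟨by linarith [hθ.1], hθ.2⟩)
      _ ≤ 2 / (l * (2 / π * d)) := by gcongr
      _ = π * d := by
          field_simp
          linear_combination -hld
  rw [← norm_integral_cexp_neg_mul_I, ← intervalIntegral.integral_add_adjacent_intervals (b := d)
    (Continuous.intervalIntegrable (by fun_prop) _ _)
    (Continuous.intervalIntegrable (by fun_prop) _ _)]
  calc _ ≤ d + π * d := norm_add_le_of_le hnear hfar
    _ = (1 + π) * d := by ring

lemma norm_integral_cexp_mul_cos_le (hl : l ≠ 0) :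
    ‖∫ θ in 0..π / 2, Complex.exp ((l * cos θ : ℝ) * Complex.I)‖ ≤
      (1 + π) * |l| ^ (-(1 / 2) : ℝ) := by
  have habs : ‖∫ θ in 0..π / 2, Complex.exp ((l * cos θ : ℝ) * Complex.I)‖ =
      ‖∫ θ in 0..π / 2, Complex.exp ((|l| * cos θ : ℝ) * Complex.I)‖ := by
    rcases abs_cases l with ⟨h, -⟩ | ⟨h, -⟩
    · rw [h]
    · rw [h, ← norm_integral_cexp_neg_mul_I]
      simp only [neg_mul]
  rw [habs]
  rcases le_total 1 |l| with h | h
  · exact norm_integral_cexp_mul_cos_le_of_one_le h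
  calc _ ≤ 1 * |π / 2 - 0| := intervalIntegral.norm_integral_le_of_norm_le_const
          fun θ _ ↦ (Complex.norm_exp_ofReal_mul_I _).le
    _ ≤ (1 + π) * 1 := by
        rw [sub_zero, abs_of_pos pi_div_two_pos]
        linarith [pi_pos]
    _ ≤ (1 + π) * |l| ^ (-(1 / 2) : ℝ) := by
        gcongr
        exact one_le_rpow_of_pos_of_le_one_of_nonpos (abs_pos.2 hl) h (by norm_num)

lemma norm_integral_cexp_mul_cos_sub_le (hl : l ≠ 0) (φ a : ℝ) :
    ‖∫ θ in a..a + 2 * π, Complex.exp ((l * cos (θ - φ) : ℝ) * Complex.I)‖ ≤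
      4 * (1 + π) * |l| ^ (-(1 / 2) : ℝ) := by
  let f : ℝ → ℝ → ℂ := fun l θ ↦ Complex.exp ((l * cos θ : ℝ) * Complex.I)
  have hf (l a b : ℝ) : IntervalIntegrable (f l) volume a b :=
    Continuous.intervalIntegrable (by fun_prop) a b
  have hhalf (l : ℝ) : ∫ θ in -(π / 2)..π / 2, f l θ = 2 * ∫ θ in 0..π / 2, f l θ := by
    rw [← intervalIntegral.integral_add_adjacent_intervals (hf l _ 0) (hf l _ _), two_mul]
    congr 1
    have h := intervalIntegral.integral_comp_neg (a := 0) (b := π / 2) (f l)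
    rw [neg_zero] at h
    rw [← h]
    simp only [f, cos_neg]
  have hperiod : ∫ θ in a..a + 2 * π, f l (θ - φ) =
      2 * (∫ θ in 0..π / 2, f l θ) + 2 * ∫ θ in 0..π / 2, f (-l) θ := by
    have hf_per : Function.Periodic (f l) (2 * π) := fun θ ↦ by simp only [f, cos_add_two_pi]
    rw [intervalIntegral.integral_comp_sub_right, add_sub_right_comm,
      hf_per.intervalIntegral_add_eq _ (-(π / 2)), ← hhalf, ← hhalf,
      ← intervalIntegral.integral_add_adjacent_intervals (hf l _ (π / 2)) (hf l _ _)]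
    congr 1
    have h := intervalIntegral.integral_comp_add_right (a := -(π / 2)) (b := π / 2) (f l) π
    rw [show -(π / 2) + π = π / 2 by ring, show π / 2 + π = -(π / 2) + 2 * π by ring] at h
    rw [← h]
    simp only [f, cos_add_pi, mul_neg, neg_mul]
  have hquarter := norm_integral_cexp_mul_cos_le hl
  have hquarter' := norm_integral_cexp_mul_cos_le (neg_ne_zero.2 hl)
  rw [abs_neg] at hquarter'
  calc _ = ‖2 * (∫ θ in 0..π / 2, f l θ) + 2 * ∫ θ in 0..π / 2, f (-l) θ‖ := congrArg _ hperiod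
    _ ≤ 2 * ((1 + π) * |l| ^ (-(1 / 2) : ℝ)) + 2 * ((1 + π) * |l| ^ (-(1 / 2) : ℝ)) := by
        refine norm_add_le_of_le ?_ ?_ <;> rw [norm_mul, Complex.norm_two] <;> gcongr
    _ = _ := by ring

end OscillatoryIntegral

local notation "ℝ²" => EuclideanSpace ℝ (Fin 2)

section Circle

/-- The point with polar coordinates `(r, θ)`. -/
noncomputable def circlePoint (r θ : ℝ) : ℝ² :=
  !₂[r * cos θ, r * sin θ]

/-- The angular measure, of total mass `2 * π`, on the circle of radius `r` about the origin. -/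
noncomputable def circleMeasure (r : ℝ) : Measure ℝ² :=
  (volume.restrict (Ioc 0 (2 * π))).map (circlePoint r)

instance (r : ℝ) : IsFiniteMeasure (circleMeasure r) := by
  unfold circleMeasure
  infer_instance

variable {r s θ φ : ℝ}

@[fun_prop]
lemma continuous_circlePoint (r : ℝ) : Continuous (circlePoint r) := by
  unfold circlePoint
  fun_prop

@[fun_prop]
lemma measurable_circlePoint (r : ℝ) : Measurable (circlePoint r) :=
  (continuous_circlePoint r).measurable

lemma periodic_circlePoint (r : ℝ) : Function.Periodic (circlePoint r) (2 * π) := fun θ ↦ by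
  simp only [circlePoint, cos_add_two_pi, sin_add_two_pi]

lemma exists_eq_circlePoint (z : ℝ²) : ∃ φ, z = circlePoint ‖z‖ φ := by
  let w : ℂ := ⟨z 0, z 1⟩
  have hnorm : ‖z‖ = ‖w‖ := by
    rw [EuclideanSpace.norm_eq, Complex.norm_eq_sqrt_sq_add_sq]
    simp [w]
  refine ⟨w.arg, ?_⟩
  ext i
  fin_cases i
  · exact (hnorm ▸ Complex.norm_mul_cos_arg w).symm
  · exact (hnorm ▸ Complex.norm_mul_sin_arg w).symm

lemma inner_circlePoint_circlePoint (r s θ φ : ℝ) :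
    inner ℝ (circlePoint r θ) (circlePoint s φ) = r * s * cos (θ - φ) := by
  simp only [circlePoint, PiLp.inner_apply, Fin.sum_univ_two, RCLike.inner_apply, conj_trivial,
    Matrix.cons_val_zero, Matrix.cons_val_one, cos_sub]
  ring

lemma norm_circlePoint_sq (r θ : ℝ) : ‖circlePoint r θ‖ ^ 2 = r ^ 2 := by
  rw [← real_inner_self_eq_norm_sq, inner_circlePoint_circlePoint, sub_self, cos_zero]
  ring

lemma norm_circlePoint_sub_circlePoint_sq (r s θ φ : ℝ) :
    ‖circlePoint r θ - circlePoint s φ‖ ^ 2 = (r - s) ^ 2 + 2 * r * s * (1 - cos (θ - φ)) := by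
  rw [norm_sub_sq_real, inner_circlePoint_circlePoint, norm_circlePoint_sq, norm_circlePoint_sq]
  ring

lemma norm_circlePoint_sub_circlePoint_sq_le (hrs : 0 ≤ r * s) (θ φ : ℝ) :
    ‖circlePoint r θ - circlePoint s φ‖ ^ 2 ≤ (r - s) ^ 2 + r * s * (θ - φ) ^ 2 := by
  rw [norm_circlePoint_sub_circlePoint_sq]
  nlinarith [one_sub_sq_div_two_le_cos (x := θ - φ)]

lemma setLIntegral_Ioc_add_eq_of_periodic {f : ℝ → ℝ≥0∞} {T : ℝ} (hf : Function.Periodic f T)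
    (hT : 0 < T) (a b : ℝ) : ∫⁻ θ in Ioc a (a + T), f θ = ∫⁻ θ in Ioc b (b + T), f θ := by
  have : VAddInvariantMeasure (AddSubgroup.zmultiples T) ℝ volume :=
    ⟨fun c _ _ ↦ measure_preimage_add _ (c : ℝ) _⟩
  exact (isAddFundamentalDomain_Ioc hT a).setLIntegral_eq (isAddFundamentalDomain_Ioc hT b)
    f hf.map_vadd_zmultiples

lemma lintegral_circleMeasure {f : ℝ² → ℝ≥0∞} (hf : Measurable f) (r a : ℝ) :
    ∫⁻ v, f v ∂circleMeasure r = ∫⁻ θ in Ioc a (a + 2 * π), f (circlePoint r θ) := by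
  have hwindow :=
    setLIntegral_Ioc_add_eq_of_periodic ((periodic_circlePoint r).comp f) two_pi_pos 0 a
  rw [zero_add] at hwindow
  rw [circleMeasure, lintegral_map hf (measurable_circlePoint r)]
  exact hwindow

lemma norm_charFun_circleMeasure_le (hr : 0 < r) {ξ : ℝ²} (hξ : ξ ≠ 0) :
    ‖charFun (circleMeasure r) ξ‖ ≤ 4 * (1 + π) * (r * ‖ξ‖) ^ (-(1 / 2) : ℝ) := by
  obtain ⟨φ, hφ⟩ := exists_eq_circlePoint ξ
  have hrξ : 0 < r * ‖ξ‖ := mul_pos hr (norm_pos_iff.2 hξ)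
  have hdecay := norm_integral_cexp_mul_cos_sub_le hrξ.ne' φ 0
  rw [zero_add, abs_of_pos hrξ] at hdecay
  have hinner (θ : ℝ) : inner ℝ (circlePoint r θ) ξ = r * ‖ξ‖ * cos (θ - φ) := by
    conv_lhs => rw [hφ]
    exact inner_circlePoint_circlePoint ..
  rw [charFun_apply, circleMeasure,
    integral_map (by fun_prop) (Continuous.aestronglyMeasurable (by fun_prop)),
    ← intervalIntegral.integral_of_le two_pi_pos.le]
  simpa only [hinner] using hdecay

lemma exp_neg_one_mul_div_le_lintegral_circleMeasure {η : ℝ} (hη : 0 < η) (hηr : η ≤ r) {z : ℝ²}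
    (hz : r ≤ ‖z‖) (hz' : ‖z‖ ≤ r + η) :
    ENNReal.ofReal (exp (-1) * (η / r)) ≤
      ∫⁻ v, ENNReal.ofReal (exp (-(‖z + v‖ ^ 2 / (4 * η ^ 2)))) ∂circleMeasure r := by
  have hr : 0 < r := hη.trans_le hηr
  obtain ⟨φ, hφ⟩ := exists_eq_circlePoint (-z)
  rw [norm_neg] at hφ
  have hclose : ∀ θ ∈ Ioc φ (φ + η / r), ‖z + circlePoint r θ‖ ^ 2 / (4 * η ^ 2) ≤ 1 := by
    intro θ hθ
    have hangle : (r * (θ - φ)) ^ 2 ≤ η ^ 2 := by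
      have : θ - φ ≤ η / r := by linarith [hθ.2]
      exact pow_le_pow_left₀ (mul_nonneg hr.le (by linarith [hθ.1])) ((le_div_iff₀' hr).1 this) 2
    have hradius : (r - ‖z‖) ^ 2 ≤ η ^ 2 := sq_le_sq' (by linarith) (by linarith)
    have hdist := norm_circlePoint_sub_circlePoint_sq_le (mul_nonneg hr.le (norm_nonneg z)) θ φ
    rw [← hφ, sub_neg_eq_add, add_comm (circlePoint r θ)] at hdist
    rw [div_le_one (by positivity)]
    have : r * ‖z‖ * (θ - φ) ^ 2 ≤ r * (2 * r) * (θ - φ) ^ 2 := by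
      gcongr
      linarith
    nlinarith
  have hwindow : η / r ≤ 2 * π := ((div_le_one hr).2 hηr).trans (by linarith [two_le_pi])
  calc ENNReal.ofReal (exp (-1) * (η / r))
      = ∫⁻ _ in Ioc φ (φ + η / r), ENNReal.ofReal (exp (-1)) := by
        rw [setLIntegral_const, volume_Ioc, add_sub_cancel_left,
          ← ENNReal.ofReal_mul (exp_pos _).le]
    _ ≤ ∫⁻ θ in Ioc φ (φ + η / r),
          ENNReal.ofReal (exp (-(‖z + circlePoint r θ‖ ^ 2 / (4 * η ^ 2)))) := by
        refine setLIntegral_mono (by fun_prop) fun θ hθ ↦ ?_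
        gcongr
        exact hclose θ hθ
    _ ≤ ∫⁻ θ in Ioc φ (φ + 2 * π),
          ENNReal.ofReal (exp (-(‖z + circlePoint r θ‖ ^ 2 / (4 * η ^ 2)))) :=
        lintegral_mono_set (Ioc_subset_Ioc_right (by gcongr))
    _ = _ := by rw [lintegral_circleMeasure (by fun_prop) r φ]

end Circle

section DistanceMeasure

variable {r η t : ℝ}

lemma exp_neg_sq_le_rpow_neg {u p : ℝ} (hu : 0 < u) (hp : 0 ≤ p) (hp' : p ≤ 2) :
    exp (-(u ^ 2)) ≤ u ^ (-p) := by
  have hpow : u ^ p ≤ u ^ 2 + 1 := by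
    rcases le_total u 1 with h | h
    · linarith [rpow_le_one hu.le h hp, sq_nonneg u]
    · have := rpow_le_rpow_of_exponent_le h hp'
      rw [rpow_two] at this
      linarith
  rw [exp_neg, rpow_neg hu.le]
  exact inv_anti₀ (rpow_pos_of_pos hu p) (hpow.trans (add_one_le_exp _))

lemma deltaMeasure_eq_diffMeasure_preimage_norm (μ : Measure ℝ²) {B : Set ℝ}
    (hB : MeasurableSet B) : deltaMeasure μ B = diffMeasure μ (norm ⁻¹' B) := by
  rw [deltaMeasure, diffMeasure, Measure.map_apply (by fun_prop) hB,
    Measure.map_apply (by fun_prop) (measurable_norm hB)]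
  simp only [preimage, dist_eq_norm, mem_ofPred_eq]

lemma mul_deltaMeasure_Icc_le_lintegral_conv (μ : Measure ℝ²) (hη : 0 < η) (hηr : η ≤ r) :
    ENNReal.ofReal (exp (-1) * (η / r)) * deltaMeasure μ (Icc r (r + η)) ≤
      ∫⁻ w, ENNReal.ofReal (exp (-(‖w‖ ^ 2 / (4 * η ^ 2)))) ∂diffMeasure μ ∗ circleMeasure r := by
  rw [Measure.lintegral_conv (by fun_prop), deltaMeasure_eq_diffMeasure_preimage_norm _
    measurableSet_Icc]
  refine le_trans ?_ (mul_meas_ge_le_lintegral (by fun_prop) (ENNReal.ofReal (exp (-1) * (η / r))))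
  gcongr
  exact fun z hz ↦ exp_neg_one_mul_div_le_lintegral_circleMeasure hη hηr hz.1 hz.2

lemma exp_mul_norm_charFun_conv_le (μ : Measure ℝ²) [IsFiniteMeasure μ] (ht : -1 ≤ t)
    (ht' : t ≤ 1) (hη : 0 < η) (hr : 0 < r) {ξ : ℝ²} (hξ : ξ ≠ 0) :
    exp (-(η ^ 2 * ‖ξ‖ ^ 2)) * ‖charFun (diffMeasure μ ∗ circleMeasure r) ξ‖ ≤
      4 * (1 + π) * r ^ (-(1 / 2) : ℝ) * η ^ (t - 1) * (‖ξ‖ ^ (t - 3 / 2) * ‖charFun μ ξ‖ ^ 2) := by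
  have hξ0 : 0 < ‖ξ‖ := norm_pos_iff.2 hξ
  have hgauss : exp (-(η ^ 2 * ‖ξ‖ ^ 2)) ≤ η ^ (t - 1) * ‖ξ‖ ^ (t - 1) := by
    rw [← mul_pow, ← mul_rpow hη.le hξ0.le, ← neg_sub 1 t]
    exact exp_neg_sq_le_rpow_neg (mul_pos hη hξ0) (by linarith) (by linarith)
  have hcircle := norm_charFun_circleMeasure_le hr hξ
  rw [mul_rpow hr.le hξ0.le] at hcircle
  rw [charFun_conv, norm_mul, charFun_diffMeasure, Complex.norm_of_nonneg (by positivity)]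
  calc _ ≤ η ^ (t - 1) * ‖ξ‖ ^ (t - 1) * (‖charFun μ ξ‖ ^ 2 *
          (4 * (1 + π) * (r ^ (-(1 / 2) : ℝ) * ‖ξ‖ ^ (-(1 / 2) : ℝ)))) := by gcongr
    _ = _ := by
        rw [show t - 3 / 2 = t - 1 + -(1 / 2) by ring, rpow_add hξ0]
        ring

lemma le_ofReal_inv_mul_mul_of_ofReal_mul_le {c d : ℝ} {x y : ℝ≥0∞} (hc : 0 < c)
    (h : ENNReal.ofReal c * x ≤ ENNReal.ofReal d * y) : x ≤ ENNReal.ofReal (c⁻¹ * d) * y := by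
  calc x = ENNReal.ofReal c⁻¹ * (ENNReal.ofReal c * x) := by
        rw [← mul_assoc, ← ENNReal.ofReal_mul (inv_nonneg.2 hc.le), inv_mul_cancel₀ hc.ne',
          ENNReal.ofReal_one, one_mul]
    _ ≤ ENNReal.ofReal c⁻¹ * (ENNReal.ofReal d * y) := by gcongr
    _ = _ := by rw [← mul_assoc, ← ENNReal.ofReal_mul (inv_nonneg.2 hc.le)]

lemma lintegral_exp_neg_norm_sq_div_conv_le (μ : Measure ℝ²) [IsFiniteMeasure μ] (ht : -1 ≤ t)
    (ht' : t ≤ 1) (hη : 0 < η) (hr : 0 < r) :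
    ENNReal.ofReal (π / η ^ 2) *
        ∫⁻ w, ENNReal.ofReal (exp (-(‖w‖ ^ 2 / (4 * η ^ 2)))) ∂diffMeasure μ ∗ circleMeasure r ≤
      ENNReal.ofReal (4 * (1 + π) * r ^ (-(1 / 2) : ℝ) * η ^ (t - 1)) *
        ∫⁻ ξ, ‖ξ‖ₑ ^ (t - 3 / 2) * ‖charFun μ ξ‖ₑ ^ 2 := by
  have hgauss := lintegral_exp_neg_norm_sq_div_le (diffMeasure μ ∗ circleMeasure r)
    (pow_pos hη 2)
  rw [finrank_euclideanSpace_fin, Nat.cast_ofNat, div_self two_ne_zero, rpow_one] at hgauss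
  refine hgauss.trans ?_
  rw [← lintegral_const_mul _ (by fun_prop)]
  refine lintegral_mono_ae ?_
  filter_upwards [Measure.ae_ne volume 0] with ξ hξ
  have hpoint := exp_mul_norm_charFun_conv_le μ ht ht' hη hr hξ
  rw [← ofReal_norm, ← ofReal_norm, ← ofReal_norm, ENNReal.ofReal_rpow_of_pos (norm_pos_iff.2 hξ),
    ← ENNReal.ofReal_pow (norm_nonneg _), ← ENNReal.ofReal_mul (exp_pos _).le,
    ← ENNReal.ofReal_mul (by positivity), ← ENNReal.ofReal_mul (by positivity)]
  exact ENNReal.ofReal_le_ofReal hpoint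

lemma deltaMeasure_Icc_le_lintegral_charFun (μ : Measure ℝ²) [IsFiniteMeasure μ] (ht : -1 ≤ t)
    (ht' : t ≤ 1) (hη : 0 < η) (hηr : η ≤ r) :
    deltaMeasure μ (Icc r (r + η)) ≤
      ENNReal.ofReal (4 * (1 + π) / (exp (-1) * π) * η ^ t * r ^ (1 / 2 : ℝ)) *
        ∫⁻ ξ, ‖ξ‖ₑ ^ (t - 3 / 2) * ‖charFun μ ξ‖ₑ ^ 2 := by
  have hr : 0 < r := hη.trans_le hηr
  have hr_pow : r * r ^ (-(1 / 2) : ℝ) = r ^ (1 / 2 : ℝ) := by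
    rw [← rpow_one_add' hr.le (by norm_num)]
    norm_num
  have hη_pow : η * η ^ (t - 1) = η ^ t := by
    rw [rpow_sub_one hη.ne', mul_div_cancel₀ _ hη.ne']
  have hconst : (π / η ^ 2 * (exp (-1) * (η / r)))⁻¹ *
      (4 * (1 + π) * r ^ (-(1 / 2) : ℝ) * η ^ (t - 1)) =
      4 * (1 + π) / (exp (-1) * π) * η ^ t * r ^ (1 / 2 : ℝ) := by
    rw [← hr_pow, ← hη_pow]
    field_simp
  rw [← hconst]
  refine le_ofReal_inv_mul_mul_of_ofReal_mul_le (by positivity) ?_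
  rw [ENNReal.ofReal_mul (by positivity), mul_assoc]
  exact (mul_le_mul_right (mul_deltaMeasure_Icc_le_lintegral_conv μ hη hηr) _).trans
    (lintegral_exp_neg_norm_sq_div_conv_le μ ht ht' hη hr)

lemma exists_deltaMeasure_Icc_le_rieszEnergy (ht : -(1 / 2) < t) (ht' : t ≤ 1) :
    ∃ K : ℝ, 0 < K ∧ ∀ (μ : Measure ℝ²) [IsFiniteMeasure μ] (r η : ℝ), 0 < η → η ≤ r →
      deltaMeasure μ (Icc r (r + η)) ≤
        ENNReal.ofReal (K * η ^ t * r ^ (1 / 2 : ℝ)) * rieszEnergy μ (t + 1 / 2) := by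
  let G : ℝ := Gamma ((2 - (t + 1 / 2)) / 2)
  let L : ℝ := π * (2 ^ (t + 1 / 2) * Gamma ((t + 1 / 2) / 2))
  have hG : 0 < G := Gamma_pos_of_pos (by linarith)
  have hL : 0 < L := by
    have := Gamma_pos_of_pos (show 0 < (t + 1 / 2) / 2 by linarith)
    positivity
  refine ⟨4 * (1 + π) / (exp (-1) * π) * (G⁻¹ * L), by positivity, ?_⟩
  intro μ _ r η hη hηr
  have henergy := ofReal_Gamma_mul_lintegral_enorm_rpow_mul_enorm_charFun_sq_le μ
    (a := t + 1 / 2) (by linarith) (by rw [finrank_euclideanSpace_fin]; norm_num; linarith)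
  rw [finrank_euclideanSpace_fin, Nat.cast_ofNat, div_self two_ne_zero, rpow_one,
    show t + 1 / 2 - 2 = t - 3 / 2 by ring] at henergy
  have hr : 0 < r := hη.trans_le hηr
  calc deltaMeasure μ (Icc r (r + η))
      ≤ ENNReal.ofReal (4 * (1 + π) / (exp (-1) * π) * η ^ t * r ^ (1 / 2 : ℝ)) *
          ∫⁻ ξ, ‖ξ‖ₑ ^ (t - 3 / 2) * ‖charFun μ ξ‖ₑ ^ 2 :=
        deltaMeasure_Icc_le_lintegral_charFun μ (by linarith) ht' hη hηr
    _ ≤ ENNReal.ofReal (4 * (1 + π) / (exp (-1) * π) * η ^ t * r ^ (1 / 2 : ℝ)) *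
          (ENNReal.ofReal (G⁻¹ * L) * rieszEnergy μ (t + 1 / 2)) := by
        gcongr
        exact le_ofReal_inv_mul_mul_of_ofReal_mul_le hG henergy
    _ = _ := by
        rw [← mul_assoc, ← ENNReal.ofReal_mul (by positivity)]
        ring_nf

end DistanceMeasure

lemma FrostmanMeasure.ofReal_rpow_half_mul_rieszEnergy_le {E : Type*} [PseudoMetricSpace E]
    [MeasurableSpace E] [OpensMeasurableSpace E] [HereditarilyLindelofSpace E] {μ : Measure E}
    [IsProbabilityMeasure μ] {σ C a r R : ℝ} (h : FrostmanMeasure μ σ C) (ha : 0 < a)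
    (haσ : a < σ) (hr : 0 ≤ r) (hR : 0 < R) (hrR : r ≤ 2 * R) {x : E}
    (hsupp : sptOf μ ⊆ Metric.ball x R) :
    ENNReal.ofReal (r ^ (1 / 2 : ℝ)) * rieszEnergy μ a ≤
      ENNReal.ofReal (2 * σ * (C * R ^ (σ - a + 1 / 2) / (σ - a))) := by
  have hpow : r ^ (1 / 2 : ℝ) * R ^ (σ - a) ≤ 2 * R ^ (σ - a + 1 / 2) := by
    calc r ^ (1 / 2 : ℝ) * R ^ (σ - a) ≤ (2 * R) ^ (1 / 2 : ℝ) * R ^ (σ - a) := by gcongr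
      _ = 2 ^ (1 / 2 : ℝ) * R ^ (σ - a + 1 / 2) := by
          rw [mul_rpow zero_le_two hR.le, mul_assoc, ← rpow_add hR, add_comm (1 / 2 : ℝ)]
      _ ≤ 2 * R ^ (σ - a + 1 / 2) := by
          gcongr
          exact rpow_le_self_of_one_le one_le_two (by norm_num)
  have hC : 0 < C := h.pos_of_sptOf_subset_ball hR hsupp
  have := sub_pos.2 haσ
  calc ENNReal.ofReal (r ^ (1 / 2 : ℝ)) * rieszEnergy μ a
      ≤ ENNReal.ofReal (r ^ (1 / 2 : ℝ)) * ENNReal.ofReal (σ * (C * R ^ (σ - a) / (σ - a))) := by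
        gcongr
        exact h.rieszEnergy_le_of_sptOf_subset_ball ha haσ hR hsupp
    _ = ENNReal.ofReal (σ * (C * (r ^ (1 / 2 : ℝ) * R ^ (σ - a)) / (σ - a))) := by
        rw [← ENNReal.ofReal_mul (by positivity)]
        ring_nf
    _ ≤ ENNReal.ofReal (σ * (C * (2 * R ^ (σ - a + 1 / 2)) / (σ - a))) := by
        gcongr
        exact ha.le.trans haσ.le
    _ = _ := by ring_nf

theorem distance_measure_interval_bound_general (t : ℝ) :
    ∃ K : ℝ, 0 < K ∧ ∀ (μ : Measure ℝ²) [IsProbabilityMeasure μ] (σ C R : ℝ) (x : ℝ²),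
      σ ≤ 2 → 0 < R → FrostmanMeasure μ σ C → sptOf μ ⊆ Metric.ball x R →
      ∀ r η : ℝ, 0 < η → η ≤ r → r ≤ 2 * R → -(1 / 2) < t → t ≤ 1 → t < σ - 1 / 2 →
        (deltaMeasure μ (Icc r (r + η))).toReal ≤
          K * (C * R ^ (σ - t) / (σ - t - 1 / 2)) * η ^ t := by
  by_cases ht : -(1 / 2) < t ∧ t ≤ 1
  swap
  · exact ⟨1, one_pos, fun _ _ _ _ _ _ _ _ _ _ _ _ _ _ _ ht0 ht1 ↦ (ht ⟨ht0, ht1⟩).elim⟩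
  obtain ⟨K, hK, hΔ⟩ := exists_deltaMeasure_Icc_le_rieszEnergy ht.1 ht.2
  refine ⟨2 * 2 * K, by positivity, ?_⟩
  intro μ _ σ C R x hσ hR hF hsupp r η hη hηr hrR _ _ htσ
  have hr : 0 < r := hη.trans_le hηr
  have hC : 0 < C := hF.pos_of_sptOf_subset_ball hR hsupp
  have hβ : 0 < σ - t - 1 / 2 := by linarith
  have henergy := hF.ofReal_rpow_half_mul_rieszEnergy_le (a := t + 1 / 2) (by linarith)
    (by linarith) hr.le hR hrR hsupp
  rw [← sub_sub, sub_add_cancel] at henergy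
  refine ENNReal.toReal_le_of_le_ofReal (by positivity) ?_
  calc deltaMeasure μ (Icc r (r + η))
      ≤ ENNReal.ofReal (K * η ^ t * r ^ (1 / 2 : ℝ)) * rieszEnergy μ (t + 1 / 2) :=
        hΔ μ r η hη hηr
    _ = ENNReal.ofReal (K * η ^ t) *
          (ENNReal.ofReal (r ^ (1 / 2 : ℝ)) * rieszEnergy μ (t + 1 / 2)) := by
        rw [ENNReal.ofReal_mul (by positivity), mul_assoc]
    _ ≤ ENNReal.ofReal (K * η ^ t) *
          ENNReal.ofReal (2 * 2 * (C * R ^ (σ - t) / (σ - t - 1 / 2))) := by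
        gcongr
        exact henergy.trans (by gcongr)
    _ = _ := by
        rw [← ENNReal.ofReal_mul (by positivity)]
        ring_nf

/-- Lemma: let `μ` be a `(2s,C)`-Frostman probability measure with `spt(μ) ⊂ B(0,R) ⊂ ℝ²`,
`1/4 < s ≤ 1`, `C, R > 0`. For each `t` there is `K = K(t) > 0` such that for all
`r, η, t` with `0 < η < r < 2R`, `0 < t ≤ 1` and `t < 2s − 1/2`,
`Δ(μ)([r, r+η]) ≤ K (C max{R^{2s−t},1}/(2s − t − 1/2) + 1) η^t`. -/
theorem distance_measure_interval_bound (t : ℝ) :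
    ∃ K : ℝ, 0 < K ∧
      ∀ (s C R : ℝ), 1 / 4 < s → s ≤ 1 → 0 < C → 0 < R →
        ∀ μ : Measure (EuclideanSpace ℝ (Fin 2)), IsProbabilityMeasure μ →
          FrostmanMeasure μ (2 * s) C →
          sptOf μ ⊆ Metric.ball (0 : EuclideanSpace ℝ (Fin 2)) R →
          ∀ r η : ℝ, 0 < η → η < r → r < 2 * R → 0 < t → t ≤ 1 → t < 2 * s - 1 / 2 →
            ((deltaMeasure μ) (Set.Icc r (r + η))).toReal ≤
              K * (C * max (R ^ (2 * s - t)) 1 / (2 * s - t - 1 / 2) + 1) * η ^ t := by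
  obtain ⟨K, hK, hΔ⟩ := distance_measure_interval_bound_general t
  refine ⟨K, hK, fun s C R _ hs hC hR μ _ hF hsupp r η hη hηr hrR ht ht' hts ↦ ?_⟩
  have hβ : 0 < 2 * s - t - 1 / 2 := by linarith
  refine (hΔ μ (2 * s) C R 0 (by linarith) hR hF hsupp r η hη hηr.le hrR.le (by linarith) ht'
    hts).trans ?_
  gcongr
  exact le_add_of_le_of_nonneg (by gcongr; exact le_max_left _ _) zero_le_one
end
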